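/- arXiv:0808.1095 — 7 statements merged into one kernel-verified Lean document; each statement's English description precedes it below -/
import Mathlib

section
/- Let R₀ be a Bezout domain, let R = R₀[t] be the polynomial ring in one variable over R₀, and let F be the field of fractions of R. Then SL₂(R[1/t]) equals the subgroup of SL₂(F) generated by SL₂(R) ∪ D(1/t,1)·SL₂(R)·D(t,1), where R[1/t] denotes the subring of F generated by R and 1/t. -/
/-!
Write `D = D(t,1)` and let `H` be the group generated by `SL₂(R)` and `D⁻¹ SL₂(R) D`. The inclusion
`H ≤ SL₂(R[1/t])` is clear. For the converse, clear denominators: if `g ∈ SL₂(R[1/t])`, then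
`tⁿ g = M` has entries in `R` and determinant `t²ⁿ`.

The key point (`exists_factor`) is that a matrix `M` over `R` with determinant `tᵐ⁺¹` factors as
`h D M'` with `h ∈ SL₂(R)` and `det M' = tᵐ`: modulo `t` it is singular over the Bezout domain
`R / tR = R₀`, so its rows satisfy a linear relation with *unimodular* coefficients
(`exists_sl2_row_zero`), and completing these to a matrix in `SL₂(R₀)` makes the first row of `M`
divisible by `t`. Splitting off two factors at a time,
`g = h₁ · (t⁻¹ D h₂ D) · (t⁻⁽ⁿ⁻¹⁾ M₂)`, and `t⁻¹ D h₂ D = D(t,1/t) · (D⁻¹ h₂ D)` lies in `H`,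
because `D(t,1/t)` is the product of an element of `SL₂(R)` and a conjugate of its inverse by `D`
(`diag_mem`). Induction on `n` finishes the proof (`mem_of_pow_smul`).
-/

open Matrix Pointwise

noncomputable section

/-- `SL₂` over a commutative ring. -/
abbrev SL2 (A : Type*) [CommRing A] := Matrix.SpecialLinearGroup (Fin 2) A

/-- The elementary matrix `E₁₂(r) = [[1, r], [0, 1]]`. -/
def E12 {A : Type*} [CommRing A] (r : A) : SL2 A :=
  ⟨!![1, r; 0, 1], by simp [Matrix.det_fin_two_of]⟩

/-- The elementary matrix `E₂₁(r) = [[1, 0], [r, 1]]`. -/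
def E21 {A : Type*} [CommRing A] (r : A) : SL2 A :=
  ⟨!![1, 0; r, 1], by simp [Matrix.det_fin_two_of]⟩

/-- `SL₂(S)` identified with the subgroup of `SL₂(F)` of matrices with entries in the
subring `S` of the field `F` (the image of `SL₂(S) → SL₂(F)`). -/
def SL2In {F : Type*} [Field F] (S : Subring F) : Subgroup (SL2 F) :=
  (Matrix.SpecialLinearGroup.map S.subtype).range

/-- `E₂(S)`: the subgroup of `SL₂(F)` generated by the elementary matrices with
entry in the subring `S`. -/
def E2 {F : Type*} [Field F] (S : Subring F) : Subgroup (SL2 F) :=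
  Subgroup.closure {g | ∃ r ∈ S, g = E12 r ∨ g = E21 r}

/-- The set `D(1/π,1)·Γ·D(π,1)` of conjugates inside `SL₂(F)`. -/
def conjSet {F : Type*} [Field F] (π : F) (Γ : Subgroup (SL2 F)) : Set (SL2 F) :=
  {g | ∃ h ∈ Γ, (g : Matrix (Fin 2) (Fin 2) F) =
    !![π⁻¹, 0; 0, 1] * (h : Matrix (Fin 2) (Fin 2) F) * !![π, 0; 0, 1]}

open Polynomial

lemma mem_SL2In_iff {F : Type*} [Field F] (S : Subring F) (g : SL2 F) :
    g ∈ SL2In S ↔ ∀ i j, g i j ∈ S := by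
  constructor
  · rintro ⟨h, rfl⟩ i j
    exact (h i j).2
  · intro hg
    refine ⟨⟨Matrix.of fun i j => ⟨g i j, hg i j⟩, ?_⟩, ?_⟩
    · apply Subtype.ext
      have h := g.det_coe
      rw [Matrix.det_fin_two] at h ⊢
      simpa using h
    · ext i j
      rfl

/-- Over a Bezout domain, a linear relation between the rows of a singular matrix can be divided
by the gcd of its coefficients, and the resulting unimodular row completed to `SL₂`. -/
lemma exists_sl2_row_zero {A : Type*} [CommRing A] [IsDomain A] [IsBezout A]
    (M : Matrix (Fin 2) (Fin 2) A) (hM : M.det = 0) :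
    ∃ k : SL2 A, ∀ j, ((k : Matrix (Fin 2) (Fin 2) A) * M) 0 j = 0 := by
  obtain ⟨v, hv, hvM⟩ := Matrix.exists_vecMul_eq_zero_iff.2 hM
  obtain ⟨d, hd⟩ := (IsBezout.span_pair_isPrincipal (v 0) (v 1)).principal
  have h0 : v 0 ∈ Ideal.span {d} := by
    rw [Ideal.span, ← hd]; exact Ideal.subset_span (by simp)
  have h1 : v 1 ∈ Ideal.span {d} := by
    rw [Ideal.span, ← hd]; exact Ideal.subset_span (by simp)
  have h2 : d ∈ Ideal.span {v 0, v 1} := by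
    rw [hd]; exact Submodule.mem_span_singleton_self d
  obtain ⟨x, hx⟩ := Ideal.mem_span_singleton.1 h0
  obtain ⟨y, hy⟩ := Ideal.mem_span_singleton.1 h1
  obtain ⟨p, q, hpq⟩ := Ideal.mem_span_pair.1 h2
  have hd0 : d ≠ 0 := by
    rintro rfl
    apply hv
    ext i
    fin_cases i
    · simpa using hx
    · simpa using hy
  have hxy : x * p + y * q = 1 := by
    apply mul_left_cancel₀ hd0
    rw [hx, hy] at hpq
    linear_combination hpq
  refine ⟨⟨!![x, y; -q, p], by rw [Matrix.det_fin_two_of]; linear_combination hxy⟩, fun j => ?_⟩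
  apply mul_left_cancel₀ hd0
  have hj := congrFun hvM j
  simp only [Matrix.vecMul, dotProduct, Fin.sum_univ_two, Pi.zero_apply, hx, hy] at hj
  simp only [Matrix.mul_apply, Fin.sum_univ_two]
  simp only [Matrix.of_apply, Matrix.cons_val_zero, Matrix.cons_val_one]
  linear_combination hj

/-- A matrix over `R₀[X]` with determinant `X ^ (m + 1)` splits off a left factor
`h * D(X, 1)` with `h` in `SL₂`. -/
lemma exists_factor {A : Type*} [CommRing A] [IsDomain A] [IsBezout A] (m : ℕ)
    (M : Matrix (Fin 2) (Fin 2) A[X]) (hM : M.det = X ^ (m + 1)) :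
    ∃ (h : SL2 A[X]) (M' : Matrix (Fin 2) (Fin 2) A[X]),
      M = (h : Matrix (Fin 2) (Fin 2) A[X]) * !![X, 0; 0, 1] * M' ∧ M'.det = X ^ m := by
  obtain ⟨k, hk⟩ := exists_sl2_row_zero (M.map constantCoeff) (by
    have := congrArg constantCoeff hM
    rw [RingHom.map_det] at this
    simpa using this)
  let K : SL2 A[X] := Matrix.SpecialLinearGroup.map C k
  have hdvd : ∀ j, X ∣ ((K : Matrix (Fin 2) (Fin 2) A[X]) * M) 0 j := by
    intro j
    rw [X_dvd_iff]
    have := hk j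
    simp only [Matrix.mul_apply, Fin.sum_univ_two, Matrix.map_apply, constantCoeff_apply] at this
    simpa [K, Matrix.mul_apply, Fin.sum_univ_two] using this
  choose r hr using hdvd
  let N : Matrix (Fin 2) (Fin 2) A[X] := (K : Matrix (Fin 2) (Fin 2) A[X]) * M
  let M' : Matrix (Fin 2) (Fin 2) A[X] := !![r 0, r 1; N 1 0, N 1 1]
  have hN : N = !![X, 0; 0, 1] * M' := by
    ext i j : 2
    fin_cases i <;> fin_cases j <;>
      simp [M', N, Matrix.mul_apply, Fin.sum_univ_two, ← hr]
  have hMN : M = ((K⁻¹ : SL2 A[X]) : Matrix (Fin 2) (Fin 2) A[X]) * N := by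
    rw [← Matrix.mul_assoc, ← Matrix.SpecialLinearGroup.coe_mul, inv_mul_cancel]
    simp
  refine ⟨K⁻¹, M', by rw [Matrix.mul_assoc, ← hN]; exact hMN, ?_⟩
  have hdet : N.det = X ^ (m + 1) := by
    simp only [N, Matrix.det_mul, hM, Matrix.SpecialLinearGroup.det_coe, one_mul]
  rw [hN, Matrix.det_mul, Matrix.det_fin_two_of] at hdet
  apply mul_left_cancel₀ (X_ne_zero (R := A))
  linear_combination hdet

/-- The conjugate `D(1/s, 1) * h * D(s, 1)` as an element of `SL₂`, written in coordinates. -/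
def conjD {F : Type*} [Field F] (s : F) (hs : s ≠ 0) (h : SL2 F) : SL2 F :=
  ⟨!![h 0 0, s⁻¹ * h 0 1; h 1 0 * s, h 1 1], by
    have := h.det_coe
    rw [Matrix.det_fin_two] at this
    rw [Matrix.det_fin_two_of]
    field_simp
    linear_combination this⟩

lemma coe_conjD {F : Type*} [Field F] (s : F) (hs : s ≠ 0) (h : SL2 F) :
    (conjD s hs h : Matrix (Fin 2) (Fin 2) F) =
      !![s⁻¹, 0; 0, 1] * (h : Matrix (Fin 2) (Fin 2) F) * !![s, 0; 0, 1] := by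
  rw [Matrix.eta_fin_two (h : Matrix (Fin 2) (Fin 2) F)]
  ext i j
  fin_cases i <;> fin_cases j <;> simp [conjD]
  field_simp

/-- The element `D(s, 1/s)` of `SL₂`. -/
def diagD {F : Type*} [Field F] (s : F) (hs : s ≠ 0) : SL2 F :=
  ⟨!![s, 0; 0, s⁻¹], by rw [Matrix.det_fin_two_of]; field_simp; simp⟩

section

variable {A F : Type*} [CommRing A] [Field F] [Algebra A[X] F]

/-- The subgroup of `SL₂(F)` generated by `SL₂(A[X])` and its conjugate by `D(X, 1)`. -/
abbrev genH (A F : Type*) [CommRing A] [Field F] [Algebra A[X] F] : Subgroup (SL2 F) :=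
  Subgroup.closure
    (↑((Matrix.SpecialLinearGroup.map (algebraMap A[X] F)).range : Subgroup (SL2 F)) ∪
      conjSet (algebraMap A[X] F X) (Matrix.SpecialLinearGroup.map (algebraMap A[X] F)).range)

lemma map_mem_genH (h : SL2 A[X]) :
    Matrix.SpecialLinearGroup.map (algebraMap A[X] F) h ∈ genH A F :=
  Subgroup.subset_closure (Or.inl ⟨h, rfl⟩)

lemma conjD_mem_genH (hs : algebraMap A[X] F X ≠ 0) (h : SL2 A[X]) :
    conjD _ hs (Matrix.SpecialLinearGroup.map (algebraMap A[X] F) h) ∈ genH A F :=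
  Subgroup.subset_closure (Or.inr ⟨_, ⟨h, rfl⟩, coe_conjD _ _ _⟩)

/-- `D(t, 1/t) = w * (D(1/t, 1) * w⁻¹ * D(t, 1))` for the Weyl element `w = [[0, -1], [1, 0]]`. -/
lemma diag_mem (hs : algebraMap A[X] F X ≠ 0) : diagD _ hs ∈ genH A F := by
  let w : SL2 A[X] := ⟨!![0, -1; 1, 0], by simp [Matrix.det_fin_two_of]⟩
  let w' : SL2 A[X] := ⟨!![0, 1; -1, 0], by simp [Matrix.det_fin_two_of]⟩
  have h : diagD _ hs = Matrix.SpecialLinearGroup.map (algebraMap A[X] F) w *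
      conjD _ hs (Matrix.SpecialLinearGroup.map (algebraMap A[X] F) w') := by
    apply Subtype.ext
    have hw : ((Matrix.SpecialLinearGroup.map (algebraMap A[X] F) w : SL2 F) :
        Matrix (Fin 2) (Fin 2) F) = !![0, -1; 1, 0] := by
      change (!![0, -1; 1, 0] : Matrix (Fin 2) (Fin 2) A[X]).map (algebraMap A[X] F) = _
      ext i j
      fin_cases i <;> fin_cases j <;> simp
    have hw' : ((Matrix.SpecialLinearGroup.map (algebraMap A[X] F) w' : SL2 F) :
        Matrix (Fin 2) (Fin 2) F) = !![0, 1; -1, 0] := by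
      change (!![0, 1; -1, 0] : Matrix (Fin 2) (Fin 2) A[X]).map (algebraMap A[X] F) = _
      ext i j
      fin_cases i <;> fin_cases j <;> simp
    rw [Matrix.SpecialLinearGroup.coe_mul, coe_conjD, hw, hw']
    ext i j
    fin_cases i <;> fin_cases j <;> simp [diagD]
  rw [h]
  exact mul_mem (map_mem_genH w) (conjD_mem_genH hs w')

/-- If `tⁿ g` has entries in `A[X]`, then `g` is in the generated subgroup; induction on `n`,
splitting off two factors `h * D(t, 1)` of `tⁿ g` at each step. -/
lemma mem_of_pow_smul [IsDomain A] [IsBezout A] (hs : algebraMap A[X] F X ≠ 0) (n : ℕ) :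
    ∀ (M : Matrix (Fin 2) (Fin 2) A[X]) (g : SL2 F), M.det = X ^ (2 * n) →
      (algebraMap A[X] F X) ^ n • (g : Matrix (Fin 2) (Fin 2) F) = M.map (algebraMap A[X] F) →
      g ∈ genH A F := by
  induction n with
  | zero =>
    intro M g hM hg
    have : g = Matrix.SpecialLinearGroup.map (algebraMap A[X] F) ⟨M, by simpa using hM⟩ := by
      apply Subtype.ext
      rw [pow_zero, one_smul] at hg
      exact hg
    rw [this]
    exact map_mem_genH _
  | succ n ih =>
    intro M g hM hg
    obtain ⟨h₁, M₁, rfl, hM₁⟩ := exists_factor (2 * n + 1) M hM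
    obtain ⟨h₂, M₂, rfl, hM₂⟩ := exists_factor (2 * n) M₁ hM₁
    set t := algebraMap A[X] F X with ht
    set k₁ := Matrix.SpecialLinearGroup.map (algebraMap A[X] F) h₁ with hk₁
    set k₂ := Matrix.SpecialLinearGroup.map (algebraMap A[X] F) h₂ with hk₂
    have hu : k₁ * (diagD t hs * conjD t hs k₂) ∈ genH A F :=
      mul_mem (map_mem_genH h₁) (mul_mem (diag_mem hs) (conjD_mem_genH hs h₂))
    set u := k₁ * (diagD t hs * conjD t hs k₂) with hudef
    -- `u = t⁻¹ • h₁ * D(t, 1) * h₂ * D(t, 1)`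
    have htu : t • (u : Matrix (Fin 2) (Fin 2) F) =
        (k₁ : Matrix (Fin 2) (Fin 2) F) * !![t, 0; 0, 1] *
          ((k₂ : Matrix (Fin 2) (Fin 2) F) * !![t, 0; 0, 1]) := by
      have h : t • ((diagD t hs : Matrix (Fin 2) (Fin 2) F) * !![t⁻¹, 0; 0, 1]) =
          !![t, 0; 0, 1] := by
        ext i j
        fin_cases i <;> fin_cases j <;> simp [diagD, hs]
      rw [hudef, Matrix.SpecialLinearGroup.coe_mul, Matrix.SpecialLinearGroup.coe_mul, coe_conjD,
        ← h]
      simp only [Matrix.mul_assoc, Matrix.smul_mul, Matrix.mul_smul]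
    have hD : (!![X, 0; 0, 1] : Matrix (Fin 2) (Fin 2) A[X]).map (algebraMap A[X] F) =
        !![t, 0; 0, 1] := by
      ext i j
      fin_cases i <;> fin_cases j <;> simp [ht]
    have hmain : t ^ (n + 1) • (g : Matrix (Fin 2) (Fin 2) F) =
        (t • (u : Matrix (Fin 2) (Fin 2) F)) * M₂.map (algebraMap A[X] F) := by
      rw [hg, htu, Matrix.map_mul, Matrix.map_mul, Matrix.map_mul, Matrix.map_mul, hD]
      simp only [Matrix.mul_assoc]
      rfl
    have hmain' : t ^ n • (g : Matrix (Fin 2) (Fin 2) F) =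
        (u : Matrix (Fin 2) (Fin 2) F) * M₂.map (algebraMap A[X] F) := by
      rw [pow_succ', mul_smul, Matrix.smul_mul] at hmain
      exact smul_right_injective _ hs hmain
    have key : u⁻¹ * g ∈ genH A F := by
      apply ih M₂ _ hM₂
      rw [Matrix.SpecialLinearGroup.coe_mul, ← Matrix.mul_smul, hmain', ← Matrix.mul_assoc,
        ← Matrix.SpecialLinearGroup.coe_mul, inv_mul_cancel]
      simp
    have := mul_mem hu key
    rwa [mul_inv_cancel_left] at this

lemma exists_pow_mul_mem (hs : algebraMap A[X] F X ≠ 0) (x : F)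
    (hx : x ∈ Subring.closure (Set.range (algebraMap A[X] F) ∪ {(algebraMap A[X] F X)⁻¹})) :
    ∃ n : ℕ, (algebraMap A[X] F X) ^ n * x ∈ (algebraMap A[X] F).range := by
  have hpow : ∀ n : ℕ, (algebraMap A[X] F X) ^ n ∈ (algebraMap A[X] F).range :=
    fun n => ⟨X ^ n, map_pow _ _ _⟩
  induction hx using Subring.closure_induction with
  | mem x hx =>
    rcases hx with hx | hx
    · exact ⟨0, by simpa using hx⟩
    · rw [Set.mem_singleton_iff] at hx
      exact ⟨1, by rw [hx, pow_one, mul_inv_cancel₀ hs]; exact one_mem _⟩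
  | zero => exact ⟨0, by simp⟩
  | one => exact ⟨0, by simp⟩
  | add x y _ _ hx hy =>
    obtain ⟨n, hn⟩ := hx
    obtain ⟨m, hm⟩ := hy
    refine ⟨n + m, ?_⟩
    convert add_mem (mul_mem (hpow m) hn) (mul_mem (hpow n) hm) using 1
    ring
  | neg x _ hx =>
    obtain ⟨n, hn⟩ := hx
    exact ⟨n, by rw [mul_neg]; exact neg_mem hn⟩
  | mul x y _ _ hx hy =>
    obtain ⟨n, hn⟩ := hx
    obtain ⟨m, hm⟩ := hy
    refine ⟨n + m, ?_⟩
    convert mul_mem hn hm using 1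
    ring

end

/-- If `R₀` is a Bezout domain, `R = R₀[t]` with fraction field `F`, then
`SL₂(R[1/t])` equals the subgroup of `SL₂(F)` generated by
`SL₂(R) ∪ D(1/t,1)·SL₂(R)·D(t,1)`. -/
theorem statement6 (R₀ : Type*) [CommRing R₀] [IsDomain R₀] [IsBezout R₀] :
    SL2In (Subring.closure
        (Set.range (algebraMap (Polynomial R₀) (FractionRing (Polynomial R₀))) ∪
          {(algebraMap (Polynomial R₀) (FractionRing (Polynomial R₀)) Polynomial.X)⁻¹})) =
      Subgroup.closure
        (↑((Matrix.SpecialLinearGroup.map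
              (algebraMap (Polynomial R₀) (FractionRing (Polynomial R₀)))).range :
            Subgroup (SL2 (FractionRing (Polynomial R₀)))) ∪
          conjSet (algebraMap (Polynomial R₀) (FractionRing (Polynomial R₀)) Polynomial.X)
            (Matrix.SpecialLinearGroup.map
              (algebraMap (Polynomial R₀) (FractionRing (Polynomial R₀)))).range) := by
  have hinj : Function.Injective (algebraMap R₀[X] (FractionRing R₀[X])) :=
    IsFractionRing.injective _ _
  have hs : algebraMap R₀[X] (FractionRing R₀[X]) X ≠ 0 := by
    simp
  apply le_antisymm
  · intro g hg
    rw [mem_SL2In_iff] at hg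
    choose n hn using fun i j => exists_pow_mul_mem hs (g i j) (hg i j)
    -- A common denominator exponent for the four entries.
    let m := n 0 0 + n 0 1 + n 1 0 + n 1 1
    have hle : ∀ i j, n i j ≤ m := by
      intro i j
      fin_cases i <;> fin_cases j <;> simp [m] <;> omega
    have hm : ∀ i j, ∃ p, algebraMap R₀[X] (FractionRing R₀[X]) p =
        (algebraMap R₀[X] (FractionRing R₀[X]) X) ^ m * g i j := by
      intro i j
      obtain ⟨p, hp⟩ := hn i j
      refine ⟨X ^ (m - n i j) * p, ?_⟩
      rw [map_mul, hp, map_pow, ← mul_assoc, ← pow_add, Nat.sub_add_cancel (hle i j)]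
    choose M hM using hm
    have hMg : (algebraMap R₀[X] (FractionRing R₀[X]) X) ^ m •
        (g : Matrix (Fin 2) (Fin 2) (FractionRing R₀[X])) =
        (Matrix.of M).map (algebraMap R₀[X] (FractionRing R₀[X])) := by
      ext i j
      simp [hM]
    refine mem_of_pow_smul hs m (Matrix.of M) g (hinj ?_) hMg
    have h1 := congrArg Matrix.det hMg
    rw [Matrix.det_smul, g.det_coe, Fintype.card_fin, mul_one, ← pow_mul, mul_comm m 2] at h1
    rw [map_pow, h1, RingHom.map_det]
    rfl
  · rw [Subgroup.closure_le]
    have hR : ∀ p, algebraMap R₀[X] (FractionRing R₀[X]) p ∈ Subring.closure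
        (Set.range (algebraMap R₀[X] (FractionRing R₀[X])) ∪
          {(algebraMap R₀[X] (FractionRing R₀[X]) X)⁻¹}) :=
      fun p => Subring.subset_closure (Or.inl ⟨p, rfl⟩)
    have hT : (algebraMap R₀[X] (FractionRing R₀[X]) X)⁻¹ ∈ Subring.closure
        (Set.range (algebraMap R₀[X] (FractionRing R₀[X])) ∪
          {(algebraMap R₀[X] (FractionRing R₀[X]) X)⁻¹}) :=
      Subring.subset_closure (Or.inr rfl)
    rintro g (⟨h, rfl⟩ | ⟨_, ⟨h, rfl⟩, hg⟩)
    · exact (mem_SL2In_iff _ _).2 fun i j => hR (h i j)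
    · refine (mem_SL2In_iff _ _).2 fun i j => ?_
      rw [← coe_conjD _ hs] at hg
      rw [Subtype.ext hg]
      fin_cases i <;> fin_cases j
      · exact hR (h 0 0)
      · exact mul_mem hT (hR (h 0 1))
      · exact mul_mem (hR (h 1 0)) (hR X)
      · exact hR (h 1 1)
end
end

section
/- Let R be a regular local ring (in particular a Noetherian integral domain) of Krull dimension at least 3, with field of fractions F, and let π be any prime element of R. Then SL₂(R[1/π]) ≠ E₂(R[1/π]), where R[1/π] denotes the subring of F generated by R and 1/π. -/
/-!
The matrix `g = [[1 + xy/π, x²/π], [-y²/π, 1 - xy/π]]` has determinant `1`; it lies outside `E₂`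
as soon as neither of `x, y ∈ R` divides the other modulo `π`.

The reason is the action on the Bruhat–Tits tree of `SL₂(F)` for the `π`-adic valuation, phrased
here with matrices over `R`. Put `d = diag(π, 1)`. Every element of `E₂(R[1/π])` is, up to a power
of `π`, a product of factors from `GL₂(R)` and copies of `d`. Such a product can be reduced: if
`d u d M` is divisible by `π` while `d M` is not, then `π` divides the lower right entry of `u`,
and `d u d = π u'` with `u' ∈ GL₂(R)`, so two letters `d` cancel (`Reduced.exists_d_mul`). Hence
every element of `E₂` is a power of `π` times a matrix `M` over `R` which is not divisible by `π`
and is either in `GL₂(R)` or of the form `u d M'`. In the latter case the columns of `M` modulo `π`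
are multiples of the second column of `u`, which is unimodular (geometrically: the path from the
base vertex to its translate starts at a point of `ℙ¹(R/π)`, not merely of `ℙ¹(Frac (R/π))`).
For `π g` this line is spanned by `(x, -y)`; as `R` is local, it contains a unimodular vector only
if `x ∣ y` or `y ∣ x` modulo `π`.

Suitable `x, y` exist because otherwise `R/π` would be a Noetherian valuation ring, hence of
dimension at most `1`, and `R` would have dimension at most `2` (`exists_not_dvd_mod`).
-/

open Matrix Pointwise

noncomputable section

section Reduction

variable {R : Type*} [CommRing R]

/-- The matrix `diag(π, 1)`. -/
def dMat (π : R) : Matrix (Fin 2) (Fin 2) R := !![π, 0; 0, 1]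

/-- Not all entries of `M` are divisible by `π`. -/
def NotDvd (π : R) (M : Matrix (Fin 2) (Fin 2) R) : Prop := ¬ ∀ i j, π ∣ M i j

/-- Products `u₁ d u₂ d ⋯ uₙ` with `uᵢ ∈ GL₂(R)` and `d = diag(π, 1)` such that no partial product
`uᵢ d uᵢ₊₁ d ⋯ uₙ` with at least one letter `d` is divisible by `π`; in the tree these are the paths
without backtracking. -/
inductive Reduced (π : R) : Matrix (Fin 2) (Fin 2) R → Prop
  | unit (u : Matrix (Fin 2) (Fin 2) R) (hu : IsUnit u.det) : Reduced π u
  | step (u M : Matrix (Fin 2) (Fin 2) R) (hu : IsUnit u.det) (hM : Reduced π M)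
      (hp : NotDvd π (u * dMat π * M)) : Reduced π (u * dMat π * M)

lemma dvd_mul_left_entries {π : R} (v : Matrix (Fin 2) (Fin 2) R) {M : Matrix (Fin 2) (Fin 2) R}
    (h : ∀ i j, π ∣ M i j) : ∀ i j, π ∣ (v * M) i j := by
  intro i j
  rw [Matrix.mul_apply]
  exact Finset.dvd_sum fun k _ => (h k j).mul_left _

lemma dvd_entries_of_unit_mul {π : R} {v M : Matrix (Fin 2) (Fin 2) R} (hv : IsUnit v.det)
    (h : ∀ i j, π ∣ (v * M) i j) : ∀ i j, π ∣ M i j := by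
  have := dvd_mul_left_entries v⁻¹ h
  rwa [← Matrix.mul_assoc, Matrix.nonsing_inv_mul v hv, Matrix.one_mul] at this

lemma Reduced.unit_mul {π : R} {v M : Matrix (Fin 2) (Fin 2) R} (hv : IsUnit v.det)
    (hM : Reduced π M) : Reduced π (v * M) := by
  cases hM with
  | unit _ hu => exact .unit _ (by rw [Matrix.det_mul]; exact hv.mul hu)
  | step u M hu hM hp =>
    have e : v * (u * dMat π * M) = (v * u) * dMat π * M := by simp only [Matrix.mul_assoc]
    rw [e]
    refine .step _ _ (by rw [Matrix.det_mul]; exact hv.mul hu) hM fun h => hp ?_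
    rw [← e] at h
    exact dvd_entries_of_unit_mul hv h

lemma not_dvd_of_isUnit_det {π : R} (hπ : ¬ IsUnit π) {u : Matrix (Fin 2) (Fin 2) R}
    (hu : IsUnit u.det) : NotDvd π u := by
  intro h
  refine hπ (isUnit_of_dvd_unit ?_ hu)
  rw [Matrix.det_fin_two]
  exact dvd_sub ((h 0 0).mul_right _) ((h 0 1).mul_right _)

lemma Reduced.notDvd {π : R} (hπ : ¬ IsUnit π) {M : Matrix (Fin 2) (Fin 2) R}
    (hM : Reduced π M) : NotDvd π M := by
  cases hM with
  | unit _ hu => exact not_dvd_of_isUnit_det hπ hu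
  | step u M hu hM hp => exact hp

/-- Prepending `d` to a reduced product either keeps it reduced or cancels two letters `d` against
one factor `π`. -/
lemma Reduced.exists_d_mul {π : R} (hπ : Prime π) {M : Matrix (Fin 2) (Fin 2) R}
    (hM : Reduced π M) : ∃ b : ℕ, ∃ M', Reduced π M' ∧ dMat π * M = π ^ b • M' := by
  by_cases hp : NotDvd π (1 * dMat π * M)
  · exact ⟨0, _, .step 1 M (by simp) hM hp, by simp⟩
  simp only [NotDvd, not_not, Matrix.one_mul] at hp
  cases hM with
  | unit _ hu =>
    exfalso
    have h0 := hp 1 0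
    have h1 := hp 1 1
    simp [dMat, Matrix.mul_apply, Fin.sum_univ_two] at h0 h1
    refine hπ.not_isUnit (isUnit_of_dvd_unit ?_ hu)
    rw [Matrix.det_fin_two]
    exact dvd_sub (h1.mul_left _) (h0.mul_left _)
  | step u N hu hN hq =>
    have key : ∀ j, π ∣ u 1 1 * N 1 j := by
      intro j
      have h := hp 1 j
      have e : (dMat π * (u * dMat π * N)) 1 j = π * (u 1 0 * N 0 j) + u 1 1 * N 1 j := by
        simp [dMat, Matrix.mul_apply, Fin.sum_univ_two]; ring
      rw [e] at h
      exact (dvd_add_right (dvd_mul_right _ _)).mp h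
    have hdiv : π ∣ u 1 1 := by
      by_contra hn
      have hN1 : ∀ j, π ∣ N 1 j := fun j => (hπ.dvd_or_dvd (key j)).resolve_left hn
      -- otherwise `π` divides `d N`, hence also `u d N`, which is reduced
      refine hq ?_
      rw [Matrix.mul_assoc]
      refine dvd_mul_left_entries u fun i j => ?_
      fin_cases i
      · simp [dMat, Matrix.mul_apply, Fin.sum_univ_two]
      · simpa [dMat, Matrix.mul_apply, Fin.sum_univ_two] using hN1 j
    obtain ⟨e, he⟩ := hdiv
    refine ⟨1, !![u 0 0 * π, u 0 1; u 1 0, e] * N, Reduced.unit_mul ?_ hN, ?_⟩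
    · rw [Matrix.det_fin_two, he] at hu
      rw [Matrix.det_fin_two_of]
      convert hu using 1
      ring
    · rw [pow_one, ← Matrix.smul_mul, ← Matrix.mul_assoc, ← Matrix.mul_assoc]
      congr 1
      rw [Matrix.eta_fin_two u, he]
      simp only [dMat, Matrix.mul_fin_two, Matrix.smul_of, Matrix.smul_cons, Matrix.smul_empty,
        smul_eq_mul, Matrix.of_apply, Matrix.cons_val_zero, Matrix.cons_val_one]
      congr! 2 <;> ring_nf

/-- Left multiplication by `N` preserves the powers of `π` times reduced products. -/
def Good (π : R) (N : Matrix (Fin 2) (Fin 2) R) : Prop :=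
  ∀ M, Reduced π M → ∃ b : ℕ, ∃ M', Reduced π M' ∧ N * M = π ^ b • M'

lemma Good.of_isUnit {π : R} {u : Matrix (Fin 2) (Fin 2) R} (hu : IsUnit u.det) : Good π u :=
  fun M hM => ⟨0, u * M, hM.unit_mul hu, by simp⟩

lemma Good.mul {π : R} {A B : Matrix (Fin 2) (Fin 2) R} (hA : Good π A) (hB : Good π B) :
    Good π (A * B) := by
  intro M hM
  obtain ⟨b, M', hM', e⟩ := hB M hM
  obtain ⟨c, M'', hM'', e'⟩ := hA M' hM'
  exact ⟨b + c, M'', hM'', by rw [Matrix.mul_assoc, e, Matrix.mul_smul, e', smul_smul, pow_add]⟩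

lemma Good.pow {π : R} {A : Matrix (Fin 2) (Fin 2) R} (hA : Good π A) (n : ℕ) :
    Good π (A ^ n) := by
  induction n with
  | zero => exact .of_isUnit (by simp)
  | succ n ih => rw [pow_succ]; exact ih.mul hA

lemma good_dMat {π : R} (hπ : Prime π) : Good π (dMat π) := fun _ hM => hM.exists_d_mul hπ

lemma good_dMat_swap {π : R} (hπ : Prime π) : Good π !![1, 0; 0, π] := by
  have hw : Good π (!![0, 1; 1, 0] : Matrix (Fin 2) (Fin 2) R) :=
    .of_isUnit (by simp [Matrix.det_fin_two_of])
  have := (hw.mul (good_dMat hπ)).mul hw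
  simpa [dMat, Matrix.mul_fin_two] using this

lemma dMat_pow (π : R) (k : ℕ) : dMat π ^ k = !![π ^ k, 0; 0, 1] := by
  induction k with
  | zero => simp [Matrix.one_fin_two]
  | succ k ih => rw [pow_succ, ih]; simp [dMat, pow_succ]

lemma swap_pow (π : R) (k : ℕ) :
    (!![1, 0; 0, π] : Matrix (Fin 2) (Fin 2) R) ^ k = !![1, 0; 0, π ^ k] := by
  induction k with
  | zero => simp [Matrix.one_fin_two]
  | succ k ih => rw [pow_succ, ih]; simp [pow_succ]

/-- The matrix is `π ^ k • E₁₂(s / π ^ k)`, and equals `diag(1, π) ^ k * E₁₂(s) * d ^ k`. -/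
lemma good_upper {π : R} (hπ : Prime π) (k : ℕ) (s : R) :
    Good π !![π ^ k, s; 0, π ^ k] := by
  have hu : Good π (!![1, s; 0, 1] : Matrix (Fin 2) (Fin 2) R) :=
    .of_isUnit (by simp [Matrix.det_fin_two_of])
  have := (((good_dMat_swap hπ).pow k).mul hu).mul ((good_dMat hπ).pow k)
  rw [dMat_pow, swap_pow] at this
  simpa [Matrix.mul_fin_two] using this

/-- The matrix is `π ^ k • E₂₁(s / π ^ k)`, and equals `d ^ k * E₂₁(s) * diag(1, π) ^ k`. -/
lemma good_lower {π : R} (hπ : Prime π) (k : ℕ) (s : R) :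
    Good π !![π ^ k, 0; s, π ^ k] := by
  have hu : Good π (!![1, 0; s, 1] : Matrix (Fin 2) (Fin 2) R) :=
    .of_isUnit (by simp [Matrix.det_fin_two_of])
  have := (((good_dMat hπ).pow k).mul hu).mul ((good_dMat_swap hπ).pow k)
  rw [dMat_pow, swap_pow] at this
  simpa [Matrix.mul_fin_two] using this

/-- Over a local ring, the matrix `π g` of the module comment is not reduced. -/
lemma not_reduced [IsLocalRing R] {π : R} (hπ : Prime π) {x y : R}
    (hxy : ∀ c, ¬ π ∣ y - c * x) (hyx : ∀ c, ¬ π ∣ x - c * y) :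
    ¬ Reduced π !![π + x * y, x ^ 2; -y ^ 2, π - x * y] := by
  have hx : ¬ π ∣ x := by simpa using hyx 0
  intro h
  generalize hH : !![π + x * y, x ^ 2; -y ^ 2, π - x * y] = H at h
  cases h with
  | unit _ hu =>
    rw [← hH, Matrix.det_fin_two_of] at hu
    exact hπ.not_isUnit (isUnit_of_dvd_unit ⟨π, by ring⟩ hu)
  | step u M hu hM hp =>
    have e0 : x ^ 2 = π * (u 0 0 * M 0 1) + u 0 1 * M 1 1 := by
      have := congrFun (congrFun hH 0) 1
      simp [dMat, Matrix.mul_apply, Fin.sum_univ_two] at this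
      rw [this]; ring
    have e1 : π - x * y = π * (u 1 0 * M 0 1) + u 1 1 * M 1 1 := by
      have := congrFun (congrFun hH 1) 1
      simp [dMat, Matrix.mul_apply, Fin.sum_univ_two] at this
      rw [this]; ring
    -- `(x², -xy)` is proportional to the second column of `u` modulo `π`
    have hcol : π ∣ x * (u 1 1 * x + u 0 1 * y) := by
      refine ⟨u 0 0 * u 1 1 * M 0 1 - u 0 1 * u 1 0 * M 0 1 + u 0 1, ?_⟩
      linear_combination u 1 1 * e0 - u 0 1 * e1
    have hcol' := (hπ.dvd_or_dvd hcol).resolve_left hx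
    have hunit : IsUnit (u 0 1) ∨ IsUnit (u 1 1) := by
      rw [Matrix.det_fin_two, sub_eq_add_neg] at hu
      rcases IsLocalRing.isUnit_or_isUnit_of_isUnit_add hu with h | h
      · exact .inr (isUnit_of_mul_isUnit_right h)
      · exact .inl (isUnit_of_mul_isUnit_left (IsUnit.neg_iff _ |>.mp h))
    rcases hunit with h | h
    · obtain ⟨i, hi⟩ := h.exists_left_inv
      refine hxy (-(i * u 1 1)) ?_
      have e : y - -(i * u 1 1) * x = i * (u 1 1 * x + u 0 1 * y) := by
        linear_combination (-y) * hi
      rw [e]; exact hcol'.mul_left _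
    · obtain ⟨i, hi⟩ := h.exists_left_inv
      refine hyx (-(i * u 0 1)) ?_
      have e : x - -(i * u 0 1) * y = i * (u 1 1 * x + u 0 1 * y) := by
        linear_combination (-x) * hi
      rw [e]; exact hcol'.mul_left _

end Reduction

/-- If `dim R ≥ 3`, divisibility modulo `π` is not a total preorder on `R`. -/
lemma exists_not_dvd_mod (R : Type*) [CommRing R] [IsDomain R] [IsNoetherianRing R]
    [IsLocalRing R] (hdim : (3 : WithBot (WithTop ℕ)) ≤ ringKrullDim R) (π : R) (hπ : Prime π) :
    ∃ x y : R, (∀ c, ¬ π ∣ y - c * x) ∧ ∀ c, ¬ π ∣ x - c * y := by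
  by_contra! hcon
  have hprime : (Ideal.span {π}).IsPrime := (Ideal.span_singleton_prime hπ.ne_zero).mpr hπ
  have hval : ValuationRing (R ⧸ Ideal.span {π}) := by
    refine ValuationRing.iff_dvd_total.mpr ⟨fun a b => ?_⟩
    obtain ⟨x, rfl⟩ := Ideal.Quotient.mk_surjective a
    obtain ⟨y, rfl⟩ := Ideal.Quotient.mk_surjective b
    have lift : ∀ x y c : R, π ∣ y - c * x →
        Ideal.Quotient.mk (Ideal.span {π}) x ∣ Ideal.Quotient.mk (Ideal.span {π}) y := by
      intro x y c h
      refine ⟨Ideal.Quotient.mk _ c, ?_⟩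
      rw [← map_mul, Ideal.Quotient.eq, Ideal.mem_span_singleton, mul_comm x c]
      exact h
    by_cases h : ∀ c, ¬ π ∣ y - c * x
    · obtain ⟨c, hc⟩ := hcon x y h
      exact .inr (lift y x c hc)
    · push Not at h
      obtain ⟨c, hc⟩ := h
      exact .inl (lift x y c hc)
  have hpid : IsPrincipalIdealRing (R ⧸ Ideal.span {π}) :=
    ((IsBezout.TFAE (R := R ⧸ Ideal.span {π})).out 0 1).mp
      (inferInstance : IsNoetherianRing (R ⧸ Ideal.span {π}))
  have h1 : ringKrullDim (R ⧸ Ideal.span {π}) ≤ 1 :=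
    (Ring.krullDimLE_iff (n := 1)).mp inferInstance
  have h2 := ringKrullDim_quotient_span_singleton_succ_eq_ringKrullDim_of_mem_nonZeroDivisors
    (x := π) (mem_nonZeroDivisors_of_ne_zero hπ.ne_zero)
    ((IsLocalRing.mem_maximalIdeal _).mpr hπ.not_isUnit)
  rw [← h2] at hdim
  have h3 := hdim.trans (add_le_add_left h1 1)
  rw [one_add_one_eq_two] at h3
  have h4 : (3 : ℕ∞) ≤ (2 : ℕ∞) := WithBot.coe_le_coe.mp h3
  exact absurd h4 (by decide)

/-- The elements of `R[1/π]` are fractions with denominator a power of `π`. -/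
lemma exists_pow_mul_eq {R F : Type*} [CommRing R] [Field F] [Algebra R F] {π : R}
    (hπ : algebraMap R F π ≠ 0) {r : F}
    (hr : r ∈ Subring.closure (Set.range (algebraMap R F) ∪ {(algebraMap R F π)⁻¹})) :
    ∃ (k : ℕ) (s : R), algebraMap R F π ^ k * r = algebraMap R F s := by
  induction hr using Subring.closure_induction with
  | mem x hx =>
    rcases hx with ⟨s, rfl⟩ | rfl
    · exact ⟨0, s, by simp⟩
    · exact ⟨1, 1, by simp [hπ]⟩
  | zero => exact ⟨0, 0, by simp⟩
  | one => exact ⟨0, 1, by simp⟩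
  | add x y _ _ hx hy =>
    obtain ⟨k, s, h⟩ := hx
    obtain ⟨l, t, h'⟩ := hy
    refine ⟨k + l, π ^ l * s + π ^ k * t, ?_⟩
    simp only [map_add, map_mul, map_pow, ← h, ← h']
    ring
  | neg x _ hx =>
    obtain ⟨k, s, h⟩ := hx
    exact ⟨k, -s, by simp [← h]⟩
  | mul x y _ _ hx hy =>
    obtain ⟨k, s, h⟩ := hx
    obtain ⟨l, t, h'⟩ := hy
    refine ⟨k + l, s * t, ?_⟩
    simp only [map_mul, ← h, ← h']
    ring

/-- Every element of `E₂(R[1/π])` is a power of `π` times a reduced product. -/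
lemma exists_reduced_of_mem_E2 {R F : Type*} [CommRing R] [Field F] [Algebra R F] {π : R}
    (hπ : Prime π) (hπF : algebraMap R F π ≠ 0) {γ : SL2 F}
    (hγ : γ ∈ E2 (Subring.closure (Set.range (algebraMap R F) ∪ {(algebraMap R F π)⁻¹}))) :
    ∃ (a b : ℕ) (M : Matrix (Fin 2) (Fin 2) R), Reduced π M ∧
      algebraMap R F π ^ a • (γ : Matrix (Fin 2) (Fin 2) F) =
        algebraMap R F π ^ b • M.map (algebraMap R F) := by
  have step : ∀ (N : Matrix (Fin 2) (Fin 2) R) (k : ℕ) (e γ : SL2 F), Good π N →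
      algebraMap R F π ^ k • (e : Matrix (Fin 2) (Fin 2) F) = N.map (algebraMap R F) →
      (∃ (a b : ℕ) (M : Matrix (Fin 2) (Fin 2) R), Reduced π M ∧
        algebraMap R F π ^ a • (γ : Matrix (Fin 2) (Fin 2) F) =
          algebraMap R F π ^ b • M.map (algebraMap R F)) →
      ∃ (a b : ℕ) (M : Matrix (Fin 2) (Fin 2) R), Reduced π M ∧
        algebraMap R F π ^ a • ((e * γ : SL2 F) : Matrix (Fin 2) (Fin 2) F) =
          algebraMap R F π ^ b • M.map (algebraMap R F) := by
    rintro N k e γ hN he ⟨a, b, M, hM, h⟩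
    obtain ⟨c, M', hM', h'⟩ := hN M hM
    refine ⟨k + a, b + c, M', hM', ?_⟩
    have h'' := congrArg (fun X => X.map (algebraMap R F)) h'
    simp only [Matrix.map_mul] at h''
    have e2 : (π ^ c • M').map (algebraMap R F) =
        algebraMap R F π ^ c • M'.map (algebraMap R F) := by
      ext i j; simp
    rw [e2, ← he] at h''
    rw [Matrix.SpecialLinearGroup.coe_mul, pow_add, pow_add, mul_smul, mul_smul, ← h'',
      ← Matrix.mul_smul, ← Matrix.mul_smul, h, Matrix.smul_mul, Matrix.mul_smul,
      Matrix.mul_smul, smul_comm]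
  have gen : ∀ r ∈ Subring.closure (Set.range (algebraMap R F) ∪ {(algebraMap R F π)⁻¹}),
      (∃ (N : Matrix (Fin 2) (Fin 2) R) (k : ℕ), Good π N ∧
        algebraMap R F π ^ k • (E12 r : Matrix (Fin 2) (Fin 2) F) = N.map (algebraMap R F)) ∧
      ∃ (N : Matrix (Fin 2) (Fin 2) R) (k : ℕ), Good π N ∧
        algebraMap R F π ^ k • (E21 r : Matrix (Fin 2) (Fin 2) F) = N.map (algebraMap R F) := by
    intro r hr
    obtain ⟨k, s, hs⟩ := exists_pow_mul_eq hπF hr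
    refine ⟨⟨_, k, good_upper hπ k s, ?_⟩, ⟨_, k, good_lower hπ k s, ?_⟩⟩ <;>
    · ext i j
      fin_cases i <;> fin_cases j <;> simp [E12, E21, hs]
  have inv12 : ∀ r : F, (E12 r)⁻¹ = E12 (-r) := by
    intro r
    rw [inv_eq_iff_mul_eq_one]
    apply Subtype.ext
    rw [Matrix.SpecialLinearGroup.coe_mul]
    simp [E12, Matrix.one_fin_two]
  have inv21 : ∀ r : F, (E21 r)⁻¹ = E21 (-r) := by
    intro r
    rw [inv_eq_iff_mul_eq_one]
    apply Subtype.ext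
    rw [Matrix.SpecialLinearGroup.coe_mul]
    simp [E21, Matrix.one_fin_two]
  unfold E2 at hγ
  induction hγ using Subgroup.closure_induction_left with
  | one => exact ⟨0, 0, 1, .unit _ (by simp), by simp⟩
  | mul_left e he γ _ ih =>
    obtain ⟨r, hr, rfl | rfl⟩ := he
    · obtain ⟨N, k, hN, h⟩ := (gen r hr).1
      exact step N k _ γ hN h ih
    · obtain ⟨N, k, hN, h⟩ := (gen r hr).2
      exact step N k _ γ hN h ih
  | inv_mul_cancel e he γ _ ih =>
    obtain ⟨r, hr, rfl | rfl⟩ := he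
    · rw [inv12]
      obtain ⟨N, k, hN, h⟩ := (gen (-r) (neg_mem hr)).1
      exact step N k _ γ hN h ih
    · rw [inv21]
      obtain ⟨N, k, hN, h⟩ := (gen (-r) (neg_mem hr)).2
      exact step N k _ γ hN h ih

/-- Two matrices not divisible by `π` that agree up to powers of `π` are equal. -/
lemma eq_of_pow_smul_eq {R : Type*} [CommRing R] [IsDomain R] {π : R} (hπ : π ≠ 0) {a b : ℕ}
    {A B : Matrix (Fin 2) (Fin 2) R} (hA : NotDvd π A) (hB : NotDvd π B)
    (h : π ^ a • A = π ^ b • B) : A = B := by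
  wlog hab : a ≤ b generalizing a b A B
  · exact (this hB hA h.symm (le_of_not_ge hab)).symm
  obtain ⟨c, rfl⟩ := Nat.exists_eq_add_of_le hab
  rw [pow_add, mul_smul] at h
  have h' : A = π ^ c • B := smul_right_injective _ (pow_ne_zero a hπ) h
  cases c with
  | zero => simpa using h'
  | succ c =>
    refine absurd (fun i j => ?_) hA
    rw [h', pow_succ', mul_smul]
    exact ⟨_, rfl⟩

/-- Let `R` be a regular local ring (Noetherian local integral domain whose
maximal ideal is generated by `dim R` elements) of Krull dimension at least `3`, with fraction
field `F`, and let `π` be any prime element of `R`. Then `SL₂(R[1/π]) ≠ E₂(R[1/π])`. -/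
theorem statement7 (R : Type*) [CommRing R] [IsDomain R] [IsNoetherianRing R] [IsLocalRing R]
    (hreg : ∃ s : Finset R, Ideal.span (↑s : Set R) = IsLocalRing.maximalIdeal R ∧
      (s.card : WithBot (WithTop ℕ)) = ringKrullDim R)
    (hdim : (3 : WithBot (WithTop ℕ)) ≤ ringKrullDim R)
    (F : Type*) [Field F] [Algebra R F] [IsFractionRing R F]
    (π : R) (hπ : Prime π) :
    SL2In (Subring.closure (Set.range (algebraMap R F) ∪ {(algebraMap R F π)⁻¹})) ≠
      E2 (Subring.closure (Set.range (algebraMap R F) ∪ {(algebraMap R F π)⁻¹})) := by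
  obtain ⟨x, y, hxy, hyx⟩ := exists_not_dvd_mod R hdim π hπ
  have hπF : algebraMap R F π ≠ 0 := by
    simpa using (FaithfulSMul.algebraMap_injective R F).ne hπ.ne_zero
  intro hEq
  set S := Subring.closure (Set.range (algebraMap R F) ∪ {(algebraMap R F π)⁻¹}) with hS
  have hR : ∀ r : R, algebraMap R F r ∈ S := fun r => Subring.subset_closure (.inl ⟨r, rfl⟩)
  have hinv : (algebraMap R F π)⁻¹ ∈ S := Subring.subset_closure (.inr rfl)
  let p : S := ⟨(algebraMap R F π)⁻¹, hinv⟩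
  let X : S := ⟨algebraMap R F x, hR x⟩
  let Y : S := ⟨algebraMap R F y, hR y⟩
  let g : SL2 S := ⟨!![1 + X * Y * p, X ^ 2 * p; -(Y ^ 2 * p), 1 - X * Y * p], by
    rw [Matrix.det_fin_two_of]; ring⟩
  have hg : Matrix.SpecialLinearGroup.map S.subtype g ∈ SL2In S := ⟨g, rfl⟩
  rw [hEq] at hg
  obtain ⟨a, b, M, hM, h⟩ := exists_reduced_of_mem_E2 hπ hπF hg
  have hgH : algebraMap R F π •
      (Matrix.SpecialLinearGroup.map S.subtype g : Matrix (Fin 2) (Fin 2) F) =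
      (!![π + x * y, x ^ 2; -y ^ 2, π - x * y]).map (algebraMap R F) := by
    ext i j
    rw [Matrix.smul_apply, Matrix.SpecialLinearGroup.map_apply_coe]
    fin_cases i <;> fin_cases j <;> simp [g, X, Y, p] <;> field_simp
  have hx : ¬ π ∣ x := by simpa using hyx 0
  have hprim : NotDvd π !![π + x * y, x ^ 2; -y ^ 2, π - x * y] := fun hd =>
    hx (hπ.dvd_of_dvd_pow (by simpa using hd 0 1))
  have hcmp : π ^ a • !![π + x * y, x ^ 2; -y ^ 2, π - x * y] = π ^ (b + 1) • M := by
    apply Matrix.map_injective (FaithfulSMul.algebraMap_injective R F)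
    have e : ∀ (c : ℕ) (N : Matrix (Fin 2) (Fin 2) R), (π ^ c • N).map (algebraMap R F) =
        algebraMap R F π ^ c • N.map (algebraMap R F) := by
      intro c N; ext i j; simp
    beta_reduce
    rw [e, e, ← hgH, smul_comm, h, smul_smul, pow_succ']
  have := eq_of_pow_smul_eq hπ.ne_zero hprim (hM.notDvd hπ.not_isUnit) hcmp
  exact not_reduced hπ hxy hyx (this ▸ hM)
end
end

section
/- Let R be an integral domain and let u, v, x, y ∈ R satisfy yu ≠ 0 and ux = vy. Then the ideal of R generated by u and v is principal if and only if the ideal of R generated by x and y is principal. -/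
/-- In a domain, if `aI = bJ` with `b ≠ 0` and `I = (g)`, then `ag = bj` for some `j ∈ J`, and
cancelling `b` in `(b)(j) = (b)J` gives `J = (j)`. -/
lemma isPrincipal_of_span_mul_eq {R : Type*} [CommRing R] [IsDomain R] {a b : R} {I J : Ideal R}
    (hb : b ≠ 0) (h : Ideal.span {a} * I = Ideal.span {b} * J) (hI : I.IsPrincipal) :
    J.IsPrincipal := by
  obtain ⟨g, rfl⟩ := hI
  rw [Ideal.submodule_span_eq, Ideal.span_singleton_mul_span_singleton] at h
  have hmem : a * g ∈ Ideal.span {b} * J := h ▸ Ideal.mem_span_singleton_self _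
  obtain ⟨j, -, hj⟩ := Ideal.mem_span_singleton_mul.1 hmem
  refine ⟨j, (Ideal.span_singleton_mul_right_inj hb).1 ?_⟩
  rw [← h, Ideal.submodule_span_eq, Ideal.span_singleton_mul_span_singleton, hj]

/-- Let `R` be an integral domain and `u, v, x, y ∈ R` with `yu ≠ 0` and
`ux = vy`. Then the ideal `(u, v)` is principal if and only if the ideal `(x, y)` is. -/
theorem statement8 (R : Type*) [CommRing R] [IsDomain R] (u v x y : R)
    (hyu : y * u ≠ 0) (h : u * x = v * y) :
    (Ideal.span {u, v} : Ideal R).IsPrincipal ↔ (Ideal.span {x, y} : Ideal R).IsPrincipal := by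
  -- Both sides are the ideal `(yu, yv) = (uy, ux)`.
  have key : Ideal.span {y} * Ideal.span {u, v} = Ideal.span {u} * Ideal.span {x, y} := by
    rw [Ideal.span_mul_span', Ideal.span_mul_span', Set.singleton_mul, Set.singleton_mul,
      Set.image_pair, Set.image_pair, h, mul_comm y v, mul_comm y u, Set.pair_comm]
  exact ⟨isPrincipal_of_span_mul_eq (right_ne_zero_of_mul hyu) key,
    isPrincipal_of_span_mul_eq (left_ne_zero_of_mul hyu) key.symm⟩
end

section
/- Let R be a subring of a field F and let r ∈ R with r ≠ 0, and let R[1/r] denote the subring of F generated by R and 1/r. Then E₂(R[1/r]) is the subgroup of SL₂(F) generated by E₂(R) ∪ {E₁₂(1/r)}. -/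
/-!
Let `G` be the group generated by `E₂(R)` and `E₁₂(1/r)`. The Weyl element
`w = E₁₂(1) E₂₁(-1) E₁₂(1)` lies in `E₂(R)` and conjugation by it exchanges `E₁₂(x)` with
`E₂₁(-x)`, so `E₂₁(-1/r) ∈ G`. Hence `G` contains
`diag(r, 1/r) w = E₁₂(r) E₂₁(-1/r) E₁₂(r)`, and conjugating by it and by `w⁻¹` shows that
`E₁₂(x) ∈ G` implies `E₁₂(x / r²) ∈ G`. An element `x` of `R[1/r]` satisfies `rⁿ x ∈ R` for some
`n`, so `x = (r²ⁿ x) / r²ⁿ` with `r²ⁿ x ∈ R`, which gives `E₁₂(x) ∈ G`; conjugating by `w` once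
more gives `E₂₁(x) ∈ G`. The other inclusion is clear.
-/

open Matrix Pointwise

noncomputable section

/-- The Weyl element `[[0, 1], [-1, 0]]`, as a product of elementary matrices. -/
def weyl (F : Type*) [Field F] : SL2 F := E12 1 * E21 (-1) * E12 1

theorem coe_E12 {F : Type*} [Field F] (x : F) :
    (E12 x : Matrix (Fin 2) (Fin 2) F) = !![1, x; 0, 1] := rfl

theorem coe_E21 {F : Type*} [Field F] (x : F) :
    (E21 x : Matrix (Fin 2) (Fin 2) F) = !![1, 0; x, 1] := rfl

theorem weyl_mul_E12 {F : Type*} [Field F] (x : F) : weyl F * E12 x = E21 (-x) * weyl F := by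
  apply Subtype.ext
  simp [weyl, coe_E12, coe_E21]

/-- As `E₁₂(r) E₂₁(-1/r) E₁₂(r) = diag(r, 1/r) w`, conjugation by it takes `E₁₂(x)` to
`E₂₁(-x / r²)`. -/
theorem mul_E12_eq_E21_mul {F : Type*} [Field F] {r : F} (hr0 : r ≠ 0) (x : F) :
    E12 r * E21 (-r⁻¹) * E12 r * E12 x =
      E21 (-(r⁻¹ * r⁻¹ * x)) * (E12 r * E21 (-r⁻¹) * E12 r) := by
  apply Subtype.ext
  simp [coe_E12, coe_E21, hr0]
  field_simp

theorem exists_pow_mul_mem_s9 {F : Type*} [Field F] {R : Subring F} {r : F} (hr : r ∈ R)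
    (hr0 : r ≠ 0) {x : F} (hx : x ∈ Subring.closure (↑R ∪ {r⁻¹} : Set F)) :
    ∃ n : ℕ, r ^ n * x ∈ R := by
  induction hx using Subring.closure_induction with
  | mem x hx =>
    rcases hx with hx | rfl
    · exact ⟨0, by simpa using hx⟩
    · exact ⟨1, by simp [hr0, R.one_mem]⟩
  | zero => exact ⟨0, by simp [R.zero_mem]⟩
  | one => exact ⟨0, by simp [R.one_mem]⟩
  | add x y _ _ ihx ihy =>
    obtain ⟨m, hm⟩ := ihx
    obtain ⟨n, hn⟩ := ihy
    refine ⟨m + n, ?_⟩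
    have h := R.add_mem (R.mul_mem (R.pow_mem hr n) hm) (R.mul_mem (R.pow_mem hr m) hn)
    convert h using 1
    ring
  | neg x _ ih =>
    obtain ⟨m, hm⟩ := ih
    exact ⟨m, by simpa using hm⟩
  | mul x y _ _ ihx ihy =>
    obtain ⟨m, hm⟩ := ihx
    obtain ⟨n, hn⟩ := ihy
    refine ⟨m + n, ?_⟩
    convert R.mul_mem hm hn using 1
    ring

/-- For `0 ≠ r ∈ R`, a subgroup containing `E₂(R)` and `E₁₂(1/r)` contains `E₂(R[1/r])`. -/
theorem E2_closure_le {F : Type*} [Field F] {R : Subring F} {r : F} (hr : r ∈ R) (hr0 : r ≠ 0)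
    {G : Subgroup (SL2 F)} (hR : E2 R ≤ G) (hG : E12 r⁻¹ ∈ G) :
    E2 (Subring.closure (↑R ∪ {r⁻¹})) ≤ G := by
  have h12 : ∀ a ∈ R, E12 a ∈ G := fun a ha => hR (Subgroup.subset_closure ⟨a, ha, Or.inl rfl⟩)
  have h21 : ∀ a ∈ R, E21 a ∈ G := fun a ha => hR (Subgroup.subset_closure ⟨a, ha, Or.inr rfl⟩)
  have hw : weyl F ∈ G :=
    G.mul_mem (G.mul_mem (h12 1 R.one_mem) (h21 _ (R.neg_mem R.one_mem))) (h12 1 R.one_mem)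
  have hswap : ∀ x : F, E12 x ∈ G → E21 (-x) ∈ G := fun x hx => by
    rw [← mul_inv_eq_of_eq_mul (weyl_mul_E12 x)]
    exact G.mul_mem (G.mul_mem hw hx) (G.inv_mem hw)
  have hd : E12 r * E21 (-r⁻¹) * E12 r ∈ G :=
    G.mul_mem (G.mul_mem (h12 r hr) (hswap _ hG)) (h12 r hr)
  have hdiv : ∀ x : F, E12 x ∈ G → E12 (r⁻¹ * r⁻¹ * x) ∈ G := fun x hx => by
    have h : E21 (-(r⁻¹ * r⁻¹ * x)) ∈ G := by
      rw [← mul_inv_eq_of_eq_mul (mul_E12_eq_E21_mul hr0 x)]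
      exact G.mul_mem (G.mul_mem hd hx) (G.inv_mem hd)
    rw [← inv_mul_eq_of_eq_mul (weyl_mul_E12 _).symm]
    exact G.mul_mem (G.inv_mem hw) (G.mul_mem h hw)
  have hpow : ∀ (n : ℕ) (x : F), E12 x ∈ G → E12 ((r⁻¹ * r⁻¹) ^ n * x) ∈ G := by
    intro n
    induction n with
    | zero => intro x hx; simpa using hx
    | succ n ih =>
      intro x hx
      rw [pow_succ', mul_assoc]
      exact hdiv _ (ih x hx)
  have hall : ∀ x ∈ Subring.closure (↑R ∪ {r⁻¹} : Set F), E12 x ∈ G := by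
    intro x hx
    obtain ⟨n, hn⟩ := exists_pow_mul_mem_s9 hr hr0 hx
    have h := hpow n _ (h12 _ (R.mul_mem (R.pow_mem hr n) hn))
    convert h using 2
    rw [mul_pow, inv_pow]
    field_simp
  rw [E2, Subgroup.closure_le]
  rintro _ ⟨x, hx, rfl | rfl⟩
  · exact hall x hx
  · simpa using hswap (-x) (hall _ (neg_mem hx))

/-- For a subring `R` of a field `F` and `0 ≠ r ∈ R`, `E₂(R[1/r])` is the
subgroup of `SL₂(F)` generated by `E₂(R) ∪ {E₁₂(1/r)}`. -/
theorem statement9 (F : Type*) [Field F] (R : Subring F) (r : F) (hr : r ∈ R) (hr0 : r ≠ 0) :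
    E2 (Subring.closure (↑R ∪ {r⁻¹})) =
      Subgroup.closure (↑(E2 R) ∪ {E12 r⁻¹}) := by
  apply le_antisymm
  · exact E2_closure_le hr hr0 (fun _ hg => Subgroup.subset_closure (Or.inl hg))
      (Subgroup.subset_closure (Or.inr rfl))
  · rw [Subgroup.closure_le]
    rintro g (hg | rfl)
    · refine Subgroup.closure_mono ?_ hg
      rintro _ ⟨x, hx, h⟩
      exact ⟨x, Subring.subset_closure (Or.inl hx), h⟩
    · exact Subgroup.subset_closure ⟨r⁻¹, Subring.subset_closure (Or.inr rfl), Or.inl rfl⟩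
end
end

section
/- Let G = G₁ *_K G₂ be an amalgamated free product along injective homomorphisms φ₁ : K → G₁ and φ₂ : K → G₂, let A and B be the images in G of G₁ and G₂ under the canonical inclusions, and U the image of K. Let H be a subgroup of G and H₀ the subgroup generated by (A ∩ H) ∪ (B ∩ H). If A = (A ∩ H)·U and B = (B ∩ H)·U (products of subsets of G), then H = H₀. -/
/-!
The set `H₀ * U` contains `1` and is stable under right multiplication by `A` and by `B`:
`H₀ * U * A ⊆ H₀ * A = H₀ * (A ∩ H) * U = H₀ * U`, and likewise for `B`. As `A` and `B` generate
the pushout, `H₀ * U` is the whole group. So any `g ∈ H` is `h * u` with `h ∈ H₀ ≤ H` and `u ∈ U`,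
whence `u ∈ U ∩ H ≤ A ∩ H ≤ H₀` and `g ∈ H₀`.
-/

open Pointwise

/-- Let `G = G₁ *_K G₂` (here: the pushout `Monoid.PushoutI φ` of the
injective homomorphisms `φ true : K → G true` and `φ false : K → G false`), let `A`, `B` be
the images of the two factors, `U` the image of `K`, `H ≤ G` and
`H₀ = ⟨(A ∩ H) ∪ (B ∩ H)⟩`. If `A = (A ∩ H)·U` and `B = (B ∩ H)·U`, then `H = H₀`. -/
theorem statement11 (K : Type*) [Group K] (G : Bool → Type*) [∀ i, Group (G i)]
    (φ : ∀ i, K →* G i) (hφ : ∀ i, Function.Injective (φ i))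
    (H : Subgroup (Monoid.PushoutI φ))
    (A : Subgroup (Monoid.PushoutI φ)) (hA : A = (Monoid.PushoutI.of (φ := φ) true).range)
    (B : Subgroup (Monoid.PushoutI φ)) (hB : B = (Monoid.PushoutI.of (φ := φ) false).range)
    (U : Subgroup (Monoid.PushoutI φ)) (hU : U = (Monoid.PushoutI.base φ).range)
    (H₀ : Subgroup (Monoid.PushoutI φ))
    (hH₀ : H₀ = Subgroup.closure ((↑A ∩ ↑H) ∪ (↑B ∩ ↑H)))
    (h1 : (↑A : Set (Monoid.PushoutI φ)) = (↑A ∩ ↑H) * (↑U : Set (Monoid.PushoutI φ)))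
    (h2 : (↑B : Set (Monoid.PushoutI φ)) = (↑B ∩ ↑H) * (↑U : Set (Monoid.PushoutI φ))) :
    H = H₀ := by
  have hUA : U ≤ A := by
    rw [hU, hA]
    rintro _ ⟨k, rfl⟩
    exact ⟨φ true k, Monoid.PushoutI.of_apply_eq_base φ true k⟩
  have hUB : U ≤ B := by
    rw [hU, hB]
    rintro _ ⟨k, rfl⟩
    exact ⟨φ false k, Monoid.PushoutI.of_apply_eq_base φ false k⟩
  have hAH : ∀ x ∈ A, x ∈ H → x ∈ H₀ := fun x hx hxH =>
    hH₀ ▸ Subgroup.subset_closure (Or.inl ⟨hx, hxH⟩)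
  have hBH : ∀ x ∈ B, x ∈ H → x ∈ H₀ := fun x hx hxH =>
    hH₀ ▸ Subgroup.subset_closure (Or.inr ⟨hx, hxH⟩)
  have hle : H₀ ≤ H := by
    rw [hH₀, Subgroup.closure_le]
    exact Set.union_subset Set.inter_subset_right Set.inter_subset_right
  -- Multiplying `h * u` by `x ∈ A` gives `h * (u * x)`, where `u * x ∈ A = (A ∩ H) * U`.
  have stepA : ∀ x ∈ A, ∀ h ∈ H₀, ∀ u ∈ U, ∃ h' ∈ H₀, ∃ u' ∈ U, h * u * x = h' * u' := by
    intro x hx h hh u hu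
    have hux : u * x ∈ (A : Set (Monoid.PushoutI φ)) := A.mul_mem (hUA hu) hx
    rw [h1] at hux
    obtain ⟨a, ⟨ha, haH⟩, v, hv, hav⟩ := hux
    exact ⟨h * a, H₀.mul_mem hh (hAH a ha haH), v, hv, by
      rw [mul_assoc, mul_assoc]; exact congrArg (h * ·) hav.symm⟩
  have stepB : ∀ x ∈ B, ∀ h ∈ H₀, ∀ u ∈ U, ∃ h' ∈ H₀, ∃ u' ∈ U, h * u * x = h' * u' := by
    intro x hx h hh u hu
    have hux : u * x ∈ (B : Set (Monoid.PushoutI φ)) := B.mul_mem (hUB hu) hx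
    rw [h2] at hux
    obtain ⟨b, ⟨hb, hbH⟩, v, hv, hbv⟩ := hux
    exact ⟨h * b, H₀.mul_mem hh (hBH b hb hbH), v, hv, by
      rw [mul_assoc, mul_assoc]; exact congrArg (h * ·) hbv.symm⟩
  have step : ∀ g : Monoid.PushoutI φ, ∀ h ∈ H₀, ∀ u ∈ U,
      ∃ h' ∈ H₀, ∃ u' ∈ U, h * u * g = h' * u' := by
    intro g
    induction g using Monoid.PushoutI.induction_on with
    | of i g =>
      cases i
      · exact stepB _ (hB ▸ ⟨g, rfl⟩)
      · exact stepA _ (hA ▸ ⟨g, rfl⟩)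
    | base k => exact stepA _ (hUA (hU ▸ ⟨k, rfl⟩))
    | mul x y ihx ihy =>
      intro h hh u hu
      obtain ⟨h', hh', u', hu', e⟩ := ihx h hh u hu
      obtain ⟨h'', hh'', u'', hu'', e'⟩ := ihy h' hh' u' hu'
      exact ⟨h'', hh'', u'', hu'', by rw [← mul_assoc, e, e']⟩
  refine le_antisymm (fun g hg => ?_) hle
  obtain ⟨h, hh, u, hu, e⟩ := step g 1 H₀.one_mem 1 U.one_mem
  rw [one_mul, one_mul] at e
  have huH : u ∈ H := by
    have : u = h⁻¹ * g := by rw [e, inv_mul_cancel_left]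
    rw [this]
    exact H.mul_mem (H.inv_mem (hle hh)) hg
  rw [e]
  exact H₀.mul_mem hh (hAH u (hUA hu) huH)
end

section
/- Let R₀ be a finitely generated integral domain, let F be the field of fractions of the polynomial ring R₀[s,t], and let f = f₀(s) + f₁(s)t + … + f_d(s)t^d ∈ R₀[s,t] be a polynomial not divisible by t (so f₀ ≠ 0). Let S be the subring of F generated by R₀[s,t] together with s⁻¹, t⁻¹, f₀⁻¹ and f⁻¹, set g := 1 − s·f₀ ∈ R₀[s], and let p be a prime element of R₀ which does not divide f₀ in R₀[s]. Then the matrix [[1 − pg·t⁻¹, p²·t⁻¹], [−g²·t⁻¹, 1 + pg·t⁻¹]] lies in SL₂(F) but does not lie in E₂(S). -/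
/-!
Let `v` be the `t`-adic valuation of `F`, let `A = {x ∈ S | v x ≤ 1}`, and let `G₀ = SL₂(A)` and
`G₁ = D⁻¹ SL₂(A) D` with `D = diag(t, 1)`. These groups stabilise the two ends of an edge of the
Bruhat-Tits tree of `SL₂(F)`. The product of the Weyl elements of `G₀` and `G₁` is
`-diag(t, t⁻¹)`, and conjugating by its powers shows that `E₂(S)` is contained in the subgroup
generated by `G₀` and `G₁` (`E2_le_sup`).

Elements of `G₀ \ G₁` move the half-tree on the `G₁` side of the edge into the other one, and
elements of `G₁ \ G₀` do the opposite. In terms of matrices, the half-trees are the conditions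
that the first row of `X` dominates the second one `v`-adically, or that the second row dominates
weakly.
The normal form of the elements of `⟨G₀, G₁⟩` together with ping-pong then shows that each element
`X` of `E₂(S)` either lies in `G₀` or can be multiplied on the left by some `γ ∈ G₀` so that the
first row of `γ X` strictly dominates (`mem_or_of_mem_E2`).

The given matrix is `M = 1 + t⁻¹ w z` with the column `w = (p, g)` and the row `z = (-g, p)`. It
has poles, so it is not in `G₀`. If the first row of `γ M` dominates, the second row has no pole,
which means that the second row `(c, d)` of `γ` satisfies `c p + d g ≡ 0` modulo `t`. The residues
of elements of `A` lie in `B = R₀[s, s⁻¹, f₀⁻¹]` (`exists_residue`). As `p` is a prime of `B` which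
does not divide `g`, the residue of `(c, d)` is `e (-g, p)` for some `e ∈ B`, and `det γ = 1` gives
`1 ∈ (p, g) B`. But `g = 1 - s f₀` is coprime to `s f₀` and is nonconstant modulo `p`, so it is not
a unit of `B / p` (`not_elementary_column`).
-/

open Matrix Pointwise

noncomputable section

/-! ### Normal forms and ping-pong in a group generated by two subgroups -/

/-- `Reduced G₀ G₁ b x` says that `x` is an alternating product of elements of `G₀ \ G₁` and
`G₁ \ G₀`, ending on the right with an arbitrary element of `G₀`. The first factor is in `G₁` if
`b` is `true` and in `G₀` if `b` is `false`. -/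
inductive Reduced_s17 {G : Type*} [Group G] (G₀ G₁ : Subgroup G) : Bool → G → Prop
  | base {g : G} : g ∈ G₀ → Reduced_s17 G₀ G₁ false g
  | left {g x : G} : g ∈ G₀ → g ∉ G₁ → Reduced_s17 G₀ G₁ true x → Reduced_s17 G₀ G₁ false (g * x)
  | right {h x : G} : h ∈ G₁ → h ∉ G₀ → Reduced_s17 G₀ G₁ false x → Reduced_s17 G₀ G₁ true (h * x)

theorem Reduced_s17.mul_left {G : Type*} [Group G] {G₀ G₁ : Subgroup G} {g x : G} {b : Bool}
    (hg : g ∈ G₀) (hx : Reduced_s17 G₀ G₁ b x) : ∃ b', Reduced_s17 G₀ G₁ b' (g * x) := by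
  cases hx with
  | base h => exact ⟨_, .base (mul_mem hg h)⟩
  | @left g' x h₀ h₁ hx =>
    rw [← mul_assoc]
    by_cases h : g * g' ∈ G₁
    · cases hx with
      | @right k y hk hk' hy =>
        refine ⟨true, ?_⟩
        rw [← mul_assoc]
        exact .right (mul_mem h hk)
          (fun h' => hk' ((Subgroup.mul_mem_cancel_left _ (mul_mem hg h₀)).1 h')) hy
    · exact ⟨_, .left (mul_mem hg h₀) h hx⟩
  | @right k y hk hk' hy =>
    by_cases h : g ∈ G₁
    · refine ⟨true, ?_⟩
      rw [← mul_assoc]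
      exact .right (mul_mem h hk) (fun h' => hk' ((Subgroup.mul_mem_cancel_left _ hg).1 h')) hy
    · exact ⟨_, .left hg h (.right hk hk' hy)⟩

theorem Reduced_s17.mul_right {G : Type*} [Group G] {G₀ G₁ : Subgroup G} {h x : G} {b : Bool}
    (hh : h ∈ G₁) (hx : Reduced_s17 G₀ G₁ b x) : ∃ b', Reduced_s17 G₀ G₁ b' (h * x) := by
  by_cases h0 : h ∈ G₀
  · exact hx.mul_left h0
  cases hx with
  | base h => exact ⟨_, .right hh h0 (.base h)⟩
  | left h₀ h₁ hx => exact ⟨_, .right hh h0 (.left h₀ h₁ hx)⟩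
  | @right k y hk hk' hy =>
    rw [← mul_assoc]
    by_cases h' : h * k ∈ G₀
    · exact hy.mul_left h'
    · exact ⟨_, .right (mul_mem hh hk) h' hy⟩

theorem exists_reduced {G : Type*} [Group G] {G₀ G₁ : Subgroup G} {x : G} (hx : x ∈ G₀ ⊔ G₁) :
    ∃ b, Reduced_s17 G₀ G₁ b x := by
  rw [Subgroup.sup_eq_closure] at hx
  induction hx using Subgroup.closure_induction_left with
  | one => exact ⟨_, .base (one_mem _)⟩
  | mul_left g hg y _ ih =>
    obtain ⟨b, ih⟩ := ih
    exact hg.elim (fun h => ih.mul_left h) (fun h => ih.mul_right h)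
  | inv_mul_cancel g hg y _ ih =>
    obtain ⟨b, ih⟩ := ih
    exact hg.elim (fun h => ih.mul_left (inv_mem h)) (fun h => ih.mul_right (inv_mem h))

/-- If `G₀ ⊆ U`, if `G₀ \ G₁` maps `V` into `U` and `G₁ \ G₀` maps `U` into `V`, then every
element of `⟨G₀, G₁⟩` outside `G₀` is moved into `V` by left multiplication with an element
of `G₀`. -/
theorem mem_or_of_pingPong {G : Type*} [Group G] {G₀ G₁ : Subgroup G} {U V : Set G}
    (hU : ∀ g ∈ G₀, g ∈ U) (hVU : ∀ g ∈ G₀, g ∉ G₁ → ∀ x ∈ V, g * x ∈ U)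
    (hUV : ∀ h ∈ G₁, h ∉ G₀ → ∀ x ∈ U, h * x ∈ V) {x : G} (hx : x ∈ G₀ ⊔ G₁) :
    x ∈ G₀ ∨ ∃ g ∈ G₀, g * x ∈ V := by
  have key : ∀ b x, Reduced_s17 G₀ G₁ b x → x ∈ if b then V else U := by
    intro b x h
    induction h with
    | base h => exact hU _ h
    | left h₀ h₁ _ ih => exact hVU _ h₀ h₁ _ ih
    | right h₁ h₀ _ ih => exact hUV _ h₁ h₀ _ ih
  obtain ⟨b, hb⟩ := exists_reduced hx
  cases hb with
  | base h => exact .inl h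
  | @left g y h₀ h₁ hy => exact .inr ⟨g⁻¹, inv_mem h₀, by simpa using key _ _ hy⟩
  | right h₁ h₀ hy => exact .inr ⟨1, one_mem _, by simpa using key _ _ (.right h₁ h₀ hy)⟩

/-! ### The action of `E₂(S)` on the tree of a discrete valuation -/

section Tree

variable {F : Type*} [Field F]

theorem SL2_mul_apply (X Y : SL2 F) (i j : Fin 2) :
    (X * Y) i j = X i 0 * Y 0 j + X i 1 * Y 1 j := by
  simp [Matrix.mul_apply, Fin.sum_univ_two]

theorem SL2_inv_apply (X : SL2 F) :
    X⁻¹ 0 0 = X 1 1 ∧ X⁻¹ 0 1 = -X 0 1 ∧ X⁻¹ 1 0 = -X 1 0 ∧ X⁻¹ 1 1 = X 0 0 := by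
  have h : (X⁻¹ : SL2 F).1 = _ := (Matrix.SpecialLinearGroup.coe_inv X).trans (adjugate_fin_two _)
  refine ⟨?_, ?_, ?_, ?_⟩ <;> exact congrFun₂ h _ _

/-- The conjugate `D⁻¹ SL₂(A) D` with `D = diag(u, 1)`, as a subgroup of `SL₂(F)`: the matrices
`[[a, b], [c, d]]` of determinant one with `a, d, u b, u⁻¹ c ∈ A`. For `u = 1` this is
`SL₂(A)`. -/
def twistedSL2 (A : Subring F) (u : F) (hu : u ≠ 0) : Subgroup (SL2 F) where
  carrier := {X | X 0 0 ∈ A ∧ u * X 0 1 ∈ A ∧ u⁻¹ * X 1 0 ∈ A ∧ X 1 1 ∈ A}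
  one_mem' := by simp [A.zero_mem, A.one_mem]
  mul_mem' := by
    rintro X Y ⟨ha, hb, hc, hd⟩ ⟨ha', hb', hc', hd'⟩
    refine ⟨?_, ?_, ?_, ?_⟩ <;> rw [SL2_mul_apply]
    · convert A.add_mem (A.mul_mem ha ha') (A.mul_mem hb hc') using 1
      field_simp
    · convert A.add_mem (A.mul_mem ha hb') (A.mul_mem hb hd') using 1
      ring
    · convert A.add_mem (A.mul_mem hc ha') (A.mul_mem hd hc') using 1
      ring
    · convert A.add_mem (A.mul_mem hc hb') (A.mul_mem hd hd') using 1
      field_simp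
  inv_mem' := by
    rintro X ⟨ha, hb, hc, hd⟩
    obtain ⟨h₁, h₂, h₃, h₄⟩ := SL2_inv_apply X
    refine ⟨?_, ?_, ?_, ?_⟩
    · rwa [h₁]
    · rw [h₂, mul_neg]; exact A.neg_mem hb
    · rw [h₃, mul_neg]; exact A.neg_mem hc
    · rwa [h₄]

theorem mem_twistedSL2 {A : Subring F} {u : F} {hu : u ≠ 0} {X : SL2 F} :
    X ∈ twistedSL2 A u hu ↔ X 0 0 ∈ A ∧ u * X 0 1 ∈ A ∧ u⁻¹ * X 1 0 ∈ A ∧ X 1 1 ∈ A := Iff.rfl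

theorem mem_twistedSL2_one {A : Subring F} {X : SL2 F} :
    X ∈ twistedSL2 A 1 one_ne_zero ↔ X 0 0 ∈ A ∧ X 0 1 ∈ A ∧ X 1 0 ∈ A ∧ X 1 1 ∈ A := by
  simp [mem_twistedSL2]

open WithZero in
theorem lt_one_iff_le_exp {x : WithZero (Multiplicative ℤ)} : x < 1 ↔ x ≤ exp (-1 : ℤ) := by
  have := lt_mul_exp_iff_le (x := x) (y := exp (-1)) exp_ne_zero
  rwa [← exp_add, neg_add_cancel, exp_zero] at this

open WithZero

/-- The elements of `S` integral for the valuation `v`. -/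
def integralPart (v : Valuation F (WithZero (Multiplicative ℤ))) (S : Subring F) : Subring F :=
  S ⊓ v.integer

theorem mem_integralPart {v : Valuation F (WithZero (Multiplicative ℤ))} {S : Subring F} {x : F} :
    x ∈ integralPart v S ↔ x ∈ S ∧ v x ≤ 1 := Iff.rfl

/-- `E₂(S)` is contained in the group generated by `SL₂(A)` and its conjugate by `diag(t, 1)`,
where `A` is the integral part of `S`. -/
theorem E2_le_sup (v : Valuation F (WithZero (Multiplicative ℤ))) (S : Subring F) {t : F}
    (ht : t ≠ 0) (hvt : v t < 1) (htS : t ∈ S) :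
    E2 S ≤ twistedSL2 (integralPart v S) 1 one_ne_zero ⊔ twistedSL2 (integralPart v S) t ht := by
  set A := integralPart v S
  set W := twistedSL2 A 1 one_ne_zero ⊔ twistedSL2 A t ht
  -- `w * w'` is `-diag(t, t⁻¹)`; conjugation by it multiplies the entry of `E12` by `t ^ 2`
  let w : SL2 F := ⟨!![0, 1; -1, 0], by simp [Matrix.det_fin_two_of]⟩
  let w' : SL2 F := ⟨!![0, t⁻¹; -t, 0], by simp [Matrix.det_fin_two_of, ht]⟩
  have hw : w ∈ W := Subgroup.mem_sup_left (mem_twistedSL2_one.2 (by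
    simp [w, A.zero_mem, A.one_mem]))
  have hw' : w' ∈ W := Subgroup.mem_sup_right (mem_twistedSL2.2 (by
    simp [w', ht, A.zero_mem, A.one_mem]))
  have h12 : ∀ n : ℕ, ∀ r : F, t ^ (2 * n) * r ∈ A → E12 r ∈ W := by
    intro n
    induction n with
    | zero =>
      intro r hr
      refine Subgroup.mem_sup_left (mem_twistedSL2_one.2 ?_)
      simpa [E12, A.zero_mem, A.one_mem] using hr
    | succ n ih =>
      intro r hr
      have h := ih (t ^ 2 * r) (by convert hr using 1; ring)
      have : E12 r = (w * w')⁻¹ * E12 (t ^ 2 * r) * (w * w') := by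
        rw [mul_assoc, eq_inv_mul_iff_mul_eq]
        ext i j
        simp only [SL2_mul_apply]
        fin_cases i <;> fin_cases j <;> simp [E12, w, w']
        field_simp
      rw [this]
      exact mul_mem (mul_mem (inv_mem (mul_mem hw hw')) h) (mul_mem hw hw')
  have h12' : ∀ r ∈ S, E12 r ∈ W := by
    intro r hr
    obtain ⟨n, hn⟩ : ∃ n : ℕ, v t ^ n * v r ≤ 1 := by
      by_cases hr0 : v r = 0
      · exact ⟨0, by simp [hr0]⟩
      obtain ⟨n, hn⟩ := exists_pow_lt₀ hvt (Units.mk0 _ (inv_ne_zero hr0))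
      exact ⟨n, by
        have := mul_le_mul_left hn.le (v r)
        simpa [hr0] using this⟩
    refine h12 n r ⟨S.mul_mem (S.pow_mem htS _) hr, ?_⟩
    change v _ ≤ 1
    rw [two_mul, pow_add, mul_assoc, v.map_mul, v.map_mul, v.map_pow]
    exact mul_le_one' (pow_le_one' hvt.le _) hn
  rw [E2, Subgroup.closure_le]
  rintro _ ⟨r, hr, rfl | rfl⟩
  · exact h12' r hr
  · have : E21 r = w * E12 (-r) * w⁻¹ := by
      rw [eq_mul_inv_iff_mul_eq]
      ext i j
      simp only [SL2_mul_apply]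
      fin_cases i <;> fin_cases j <;> simp [E12, E21, w]
    rw [this]
    exact mul_mem (mul_mem hw (h12' _ (S.neg_mem hr))) (inv_mem hw)

/-- The matrices whose first row strictly dominates the second one: the largest value of `v` on an
entry is attained in the first row only. The witness `j` is the column of a dominating entry.
These are the `X` for which the vertex `X • O²` of the tree is separated from the vertex `O²` by
the edge joining `O²` to the vertex fixed by `D⁻¹ SL₂(O) D`, where `O` is the valuation ring and
`D = diag(t, 1)` for a uniformiser `t`. -/
def upperDominant (v : Valuation F (WithZero (Multiplicative ℤ))) : Set (SL2 F) :=
  {X | ∃ j, ∀ i, v (X 0 i) ≤ v (X 0 j) ∧ v (X 1 i) < v (X 0 j)}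

/-- The matrices for which the largest value of `v` on an entry is attained in the second row. This
is the complement of `upperDominant`, although that fact plays no role. -/
def lowerDominant (v : Valuation F (WithZero (Multiplicative ℤ))) : Set (SL2 F) :=
  {X | ∃ j, 0 < v (X 1 j) ∧ ∀ i, v (X 1 i) ≤ v (X 1 j) ∧ v (X 0 i) ≤ v (X 1 j)}

/-- An element of `E₂(S)` lies in `SL₂(A)`, with `A` the integral part of `S`, or else some
`g ∈ SL₂(A)` moves it to a matrix whose first row strictly dominates. -/
theorem mem_or_of_mem_E2 (v : Valuation F (WithZero (Multiplicative ℤ))) (S : Subring F) {t : F}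
    (ht : t ≠ 0) (hvt : v t = exp (-1 : ℤ)) (htS : t ∈ S) (htS' : t⁻¹ ∈ S) {X : SL2 F}
    (hX : X ∈ E2 S) :
    X ∈ twistedSL2 (integralPart v S) 1 one_ne_zero ∨
      ∃ g ∈ twistedSL2 (integralPart v S) 1 one_ne_zero, g * X ∈ upperDominant v := by
  have hvt1 : v t < 1 := lt_one_iff_le_exp.2 hvt.le
  have mul_le {a b : F} {c : WithZero (Multiplicative ℤ)} (ha : v a ≤ 1) (hb : v b ≤ c) :
      v (a * b) ≤ c := by
    rw [v.map_mul]; exact (mul_le_of_le_one_left' ha).trans hb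
  refine mem_or_of_pingPong (U := lowerDominant v) ?_ ?_ ?_ (E2_le_sup v S ht hvt1 htS hX)
  · -- entries in the valuation ring and determinant one force a unit in the second row
    intro g hg
    obtain ⟨⟨-, ha⟩, ⟨-, hb⟩, ⟨-, hc⟩, ⟨-, hd⟩⟩ := mem_twistedSL2_one.1 hg
    change v _ ≤ 1 at ha hb hc hd
    have hdet := g.det_coe
    rw [Matrix.det_fin_two] at hdet
    have : ∃ j, v (g 1 j) = 1 := by
      by_contra! hne
      have h0 := (hne 0).lt_of_le hc
      have h1 := (hne 1).lt_of_le hd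
      have : v (g 0 0 * g 1 1 - g 0 1 * g 1 0) < 1 := by
        refine v.map_sub_lt ?_ ?_ <;> rw [v.map_mul]
        · exact (mul_le_of_le_one_left' ha).trans_lt h1
        · exact (mul_le_of_le_one_left' hb).trans_lt h0
      rw [hdet, v.map_one] at this
      exact this.false
    obtain ⟨j, hj⟩ := this
    refine ⟨j, by simp [hj], fun i => ?_⟩
    rw [hj]
    fin_cases i <;> simp [ha, hb, hc, hd]
  · rintro g hg hg1 X ⟨j, hj⟩
    obtain ⟨ha, hb, hc, hd⟩ := mem_twistedSL2_one.1 hg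
    -- since `t` is a uniformiser, a non-unit lower left entry would be divisible by `t` in `A`
    have hc1 : v (g 1 0) = 1 := by
      by_contra hne
      have hlt := lt_one_iff_le_exp.1 (lt_of_le_of_ne hc.2 hne)
      refine hg1 (mem_twistedSL2.2 ⟨ha, ?_, ⟨S.mul_mem htS' hc.1, ?_⟩, hd⟩)
      · exact ⟨S.mul_mem htS hb.1, mul_le hvt1.le hb.2⟩
      · change v _ ≤ 1
        rw [v.map_mul, map_inv₀, hvt]
        exact (mul_le_mul_right hlt _).trans (inv_mul_cancel₀ exp_ne_zero).le
    have hj' : v ((g * X) 1 j) = v (X 0 j) := by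
      rw [SL2_mul_apply, v.map_add_eq_of_lt_left] <;> rw [v.map_mul (g 1 0), hc1, one_mul]
      rw [v.map_mul]
      exact (mul_le_of_le_one_left' hd.2).trans_lt (hj j).2
    refine ⟨j, ?_, fun i => ?_⟩
    · rw [hj']; exact zero_le.trans_lt (hj j).2
    · rw [hj', SL2_mul_apply, SL2_mul_apply]
      exact ⟨v.map_add_le (mul_le hc.2 (hj i).1) (mul_le hd.2 (hj i).2.le),
        v.map_add_le (mul_le ha.2 (hj i).1) (mul_le hb.2 (hj i).2.le)⟩
  · rintro h hh hh0 X ⟨j, hj0, hj⟩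
    obtain ⟨ha, hb, hc, hd⟩ := mem_twistedSL2.1 hh
    have hbS : h 0 1 ∈ S := by
      have := S.mul_mem htS' hb.1
      rwa [inv_mul_cancel_left₀ ht] at this
    have hcA : h 1 0 ∈ integralPart v S := by
      have h1 := S.mul_mem htS hc.1
      have h2 := mul_le hvt1.le hc.2
      rw [mul_inv_cancel_left₀ ht] at h1 h2
      exact ⟨h1, h2⟩
    have hb1 : 1 < v (h 0 1) := by
      by_contra! hle
      exact hh0 (mem_twistedSL2_one.2 ⟨ha, ⟨hbS, hle⟩, hcA, hd⟩)
    have hlt : v (X 1 j) < v (h 0 1) * v (X 1 j) := by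
      simpa using (mul_lt_mul_iff_left₀ hj0).2 hb1
    have hj' : v ((h * X) 0 j) = v (h 0 1) * v (X 1 j) := by
      rw [SL2_mul_apply, v.map_add_eq_of_lt_right] <;> rw [v.map_mul (h 0 1)]
      exact (mul_le ha.2 (hj j).2).trans_lt hlt
    refine ⟨j, fun i => ?_⟩
    rw [hj', SL2_mul_apply, SL2_mul_apply]
    refine ⟨v.map_add_le ((mul_le ha.2 (hj i).2).trans hlt.le) ?_,
      v.map_add_lt ((mul_le hcA.2 (hj i).2).trans_lt hlt) ((mul_le hd.2 (hj i).1).trans_lt hlt)⟩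
    rw [v.map_mul]
    exact mul_le_mul_right (hj i).1 _

end Tree

/-! ### The `t`-adic valuation and residues -/

section Arithmetic

open Polynomial WithZero

/-- The `X`-adic valuation on the field of fractions of `P[X]`, obtained by embedding this field
into the Laurent series over the field of fractions of `P`. -/
theorem exists_tAdicValuation (P : Type*) [CommRing P] [IsDomain P] :
    ∃ v : Valuation (FractionRing P[X]) (WithZero (Multiplicative ℤ)),
      ∀ (r : P[X]) (n : ℕ), v (algebraMap _ _ r) ≤ exp (-(n : ℤ)) ↔ X ^ n ∣ r := by
  let K := FractionRing P
  let φ : P[X] →+* LaurentSeries K := (HahnSeries.ofPowerSeries ℤ K).comp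
    ((coeToPowerSeries.ringHom (R := K)).comp (mapRingHom (algebraMap P K)))
  have hφ : Function.Injective φ := HahnSeries.ofPowerSeries_injective.comp
    ((Polynomial.coe_injective K).comp (map_injective _ (IsFractionRing.injective P K)))
  refine ⟨Valuation.comap (IsFractionRing.lift (K := FractionRing P[X]) hφ) Valued.v,
    fun r n => ?_⟩
  rw [Valuation.comap_apply, IsFractionRing.lift_algebraMap,
    LaurentSeries.valuation_le_iff_coeff_lt_eq_zero, X_pow_dvd_iff]
  have hcoeff : ∀ d : ℕ, (φ r).coeff d = algebraMap P K (r.coeff d) := by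
    intro d
    change ((HahnSeries.ofPowerSeries ℤ K) _).coeff (d : ℤ) = _
    rw [LaurentSeries.coeff_coe_powerSeries]
    simp
  have hneg : ∀ d : ℤ, d < 0 → (φ r).coeff d = 0 := by
    intro d hd
    change ((HahnSeries.ofPowerSeries ℤ K) _).coeff d = _
    rw [PowerSeries.coeff_coe, if_pos hd]
  constructor
  · intro h d hd
    have := h d (by exact_mod_cast hd)
    rwa [hcoeff, map_eq_zero_iff _ (IsFractionRing.injective P K)] at this
  · intro h d hd
    rcases lt_or_ge d 0 with h0 | h0
    · exact hneg d h0
    · lift d to ℕ using h0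
      rw [hcoeff, h d (by exact_mod_cast hd), map_zero]

/-- Let `B = R₀[s, s⁻¹, f₀⁻¹]` and `g = 1 - s f₀`. The row `(c, d)` is, up to powers of `s f₀ ^ 2`,
the second row of a matrix in `SL₂(B)`. Such a row cannot annihilate the column `(p, g)`: it would
be a multiple of `(-g, p)`, so `p` and `g` would generate the unit ideal of `B`. -/
theorem not_elementary_column {R₀ : Type*} [CommRing R₀] [IsDomain R₀] {p : R₀} (hp : Prime p)
    {f₀ : R₀[X]} (hpf : ¬ C p ∣ f₀) {a b c d : R₀[X]} {k : ℕ}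
    (hcd : c * C p + d * (1 - X * f₀) = 0) (hdet : a * d - b * c = (X * f₀ ^ 2) ^ k) : False := by
  have hpC : Prime (C p : R₀[X]) := prime_C_iff.2 hp
  have hpg : ¬ C p ∣ 1 - X * f₀ := by
    intro h
    have := (C_dvd_iff_dvd_coeff _ _).1 h 0
    exact hp.not_isUnit (isUnit_of_dvd_one (by simpa using this))
  have hpd : C p ∣ d := by
    refine (hpC.dvd_or_dvd (a := d) (b := 1 - X * f₀) ⟨-c, ?_⟩).resolve_right hpg
    linear_combination hcd
  obtain ⟨e, rfl⟩ := hpd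
  have hc : c = -(e * (1 - X * f₀)) := by
    refine mul_left_cancel₀ hpC.ne_zero ?_
    linear_combination hcd
  -- modulo `p`, the polynomial `g` divides a power of `s f₀ ^ 2`, to which it is coprime
  let I : Ideal R₀ := Ideal.span {p}
  have : I.IsPrime := (Ideal.span_singleton_prime hp.ne_zero).2 hp
  let π : R₀[X] →+* (R₀ ⧸ I)[X] := mapRingHom (Ideal.Quotient.mk I)
  have hπp : π (C p) = 0 := by
    simp [π, Ideal.Quotient.eq_zero_iff_mem.2 (Ideal.mem_span_singleton_self p), I]
  have hπf : π f₀ ≠ 0 := by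
    intro h
    refine hpf ((C_dvd_iff_dvd_coeff _ _).2 fun i => ?_)
    have := congrArg (fun q => q.coeff i) h
    simpa [π, Ideal.Quotient.eq_zero_iff_mem, I, Ideal.mem_span_singleton] using this
  set G : (R₀ ⧸ I)[X] := 1 - X * π f₀ with hG
  have hdvd : G ∣ (X * π f₀ ^ 2) ^ k := by
    refine ⟨π b * π e, ?_⟩
    have h := congrArg π hdet
    simp only [hc, map_sub, map_mul, map_pow, map_neg, map_one, hπp] at h
    have hX : π X = X := by simp [π]
    rw [hX] at h
    rw [← h, hG]
    ring
  have hcop : IsCoprime G ((X * π f₀ ^ 2) ^ k) := by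
    have h1 : IsCoprime G (X * π f₀) := ⟨1, 1, by rw [hG]; ring⟩
    have h2 := h1.mul_right h1.of_mul_right_right
    convert h2.pow_right (n := k) using 2
    ring
  have hunit : IsUnit G := hcop.isUnit_of_dvd' dvd_rfl hdvd
  have hdeg : G.natDegree = (π f₀).natDegree + 1 := by
    rw [hG, natDegree_sub_eq_right_of_natDegree_lt] <;> rw [natDegree_X_mul hπf]
    simp
  rw [natDegree_eq_zero_of_isUnit hunit] at hdeg
  omega

/-- The product `t s f₀ f` serves as a common denominator for the elements of `S`. -/
theorem exists_denominator {R : Type*} [CommRing R] [IsDomain R] {s t f₀ f : R}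
    (hs : s ≠ 0) (ht : t ≠ 0) (hf₀ : f₀ ≠ 0) (hf : f ≠ 0) {x : FractionRing R}
    (hx : x ∈ Subring.closure (Set.range (algebraMap R (FractionRing R)) ∪
      {(algebraMap R (FractionRing R) s)⁻¹, (algebraMap R (FractionRing R) t)⁻¹,
        (algebraMap R (FractionRing R) f₀)⁻¹, (algebraMap R (FractionRing R) f)⁻¹})) :
    ∃ (n : ℕ) (r : R), x * algebraMap R (FractionRing R) (t * (s * f₀ * f)) ^ n =
      algebraMap R (FractionRing R) r := by
  set ι := algebraMap R (FractionRing R) with hι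
  have hne : ∀ {y : R}, y ≠ 0 → ι y ≠ 0 := fun hy =>
    (map_ne_zero_iff _ (IsFractionRing.injective R (FractionRing R))).2 hy
  have hs' := hne hs
  have ht' := hne ht
  have hf₀' := hne hf₀
  have hf' := hne hf
  induction hx using Subring.closure_induction with
  | mem x hx =>
    simp only [Set.mem_union, Set.mem_range, Set.mem_insert_iff, Set.mem_singleton_iff] at hx
    obtain ⟨r, rfl⟩ | rfl | rfl | rfl | rfl := hx
    · exact ⟨0, r, by simp⟩
    · exact ⟨1, t * f₀ * f, by simp only [map_mul, pow_one]; field_simp⟩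
    · exact ⟨1, s * f₀ * f, by simp only [map_mul, pow_one]; field_simp⟩
    · exact ⟨1, t * s * f, by simp only [map_mul, pow_one]; field_simp⟩
    · exact ⟨1, t * s * f₀, by simp only [map_mul, pow_one]; field_simp⟩
  | zero => exact ⟨0, 0, by simp⟩
  | one => exact ⟨0, 1, by simp⟩
  | add x y _ _ hx hy =>
    obtain ⟨n, r, hr⟩ := hx
    obtain ⟨k, q, hq⟩ := hy
    refine ⟨n + k, r * (t * (s * f₀ * f)) ^ k + q * (t * (s * f₀ * f)) ^ n, ?_⟩
    rw [map_add, map_mul ι r, map_mul ι q, ← hr, ← hq, map_pow, map_pow]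
    ring
  | neg x _ hx =>
    obtain ⟨n, r, hr⟩ := hx
    exact ⟨n, -r, by rw [map_neg, ← hr]; ring⟩
  | mul x y _ _ hx hy =>
    obtain ⟨n, r, hr⟩ := hx
    obtain ⟨k, q, hq⟩ := hy
    refine ⟨n + k, r * q, ?_⟩
    rw [map_mul ι r, ← hr, ← hq]
    ring

/-- An element of `P[X]` divided by a power of `X s f₀ f`, with `f₀ = f(0)`, has its residue at
`X = 0`, if it is integral there, in `P[s⁻¹, f₀⁻¹]`. The denominator is written as a power of
`s f₀ ^ 2`, the value at `0` of `s f₀ f`, and every large exponent is allowed. -/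
theorem exists_residue {P : Type*} [CommRing P] [IsDomain P] {f : P[X]} {s : P}
    {v : Valuation (FractionRing P[X]) (WithZero (Multiplicative ℤ))}
    (hv : ∀ (r : P[X]) (n : ℕ), v (algebraMap _ _ r) ≤ exp (-(n : ℤ)) ↔ X ^ n ∣ r)
    {x : FractionRing P[X]} {n : ℕ} {r : P[X]} (hx1 : v x ≤ 1)
    (hx : x * algebraMap P[X] (FractionRing P[X]) (X * (C s * C (f.coeff 0) * f)) ^ n =
      algebraMap _ _ r) :
    ∃ N : ℕ, ∀ n ≥ N, ∃ q : P, v (x * algebraMap P[X] (FractionRing P[X])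
      (C (s * f.coeff 0 ^ 2)) ^ n - algebraMap _ _ (C q)) < 1 := by
  set ι := algebraMap P[X] (FractionRing P[X]) with hι
  have hι1 : ∀ r : P[X], v (ι r) ≤ 1 := fun r => by
    have := (hv r 0).2 (by simp)
    simpa using this
  have hιlt : ∀ r : P[X], v (ι r) < 1 ↔ X ∣ r := fun r => by
    rw [lt_one_iff_le_exp]
    simpa using hv r 1
  have hX : ι X ≠ 0 :=
    (map_ne_zero_iff _ (IsFractionRing.injective P[X] (FractionRing P[X]))).2 X_ne_zero
  have hdvd : X ^ n ∣ r := by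
    rw [← hv, ← hx, v.map_mul, map_mul ι X, mul_pow, v.map_mul]
    have h1 : v (ι X ^ n) ≤ exp (-(n : ℤ)) := by
      rw [← map_pow]; exact (hv _ _).2 dvd_rfl
    have h2 : v (ι (C s * C (f.coeff 0) * f) ^ n) ≤ 1 := by
      rw [← map_pow]; exact hι1 _
    exact (mul_le_of_le_one_left' hx1).trans ((mul_le_of_le_one_right' h2).trans h1)
  obtain ⟨r', rfl⟩ := hdvd
  have hx' : x * ι (C s * C (f.coeff 0) * f) ^ n = ι r' := by
    refine mul_left_cancel₀ (pow_ne_zero n hX) ?_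
    rw [map_mul ι X, map_mul ι (X ^ n), map_pow] at hx
    rw [← hx]
    ring
  set u : P := s * f.coeff 0 ^ 2 with hu
  have hn : v (x * ι (C u) ^ n - ι (C (r'.coeff 0))) < 1 := by
    have e : x * ι (C u) ^ n - ι (C (r'.coeff 0)) =
        x * ι (C u ^ n - (C s * C (f.coeff 0) * f) ^ n) + ι (r' - C (r'.coeff 0)) := by
      rw [map_sub, map_sub, map_pow, map_pow, ← hx']
      ring
    rw [e]
    refine v.map_add_lt ?_ ((hιlt _).2 ?_)
    · rw [v.map_mul]
      refine (mul_le_of_le_one_left' hx1).trans_lt ((hιlt _).2 ?_)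
      rw [X_dvd_iff, coeff_zero_eq_eval_zero]
      have : f.eval 0 = f.coeff 0 := (coeff_zero_eq_eval_zero f).symm
      simp only [eval_sub, eval_pow, eval_mul, eval_C, this, hu]
      ring
    · rw [X_dvd_iff]; simp
  refine ⟨n, fun k hk => ⟨r'.coeff 0 * u ^ (k - n), ?_⟩⟩
  obtain ⟨l, rfl⟩ := Nat.exists_eq_add_of_le hk
  have e : x * ι (C u) ^ (n + l) - ι (C (r'.coeff 0 * u ^ (n + l - n))) =
      (x * ι (C u) ^ n - ι (C (r'.coeff 0))) * ι (C u ^ l) := by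
    rw [Nat.add_sub_cancel_left, C_mul (a := r'.coeff 0), map_mul ι (C (r'.coeff 0)),
      C_pow (a := u), map_pow ι _ l, pow_add]
    ring
  rw [e, v.map_mul]
  exact (mul_le_of_le_one_right' (hι1 _)).trans_lt hn

end Arithmetic

/-! ### The exotic matrix -/

/-- With `R₀` a finitely generated integral domain,
`R = R₀[s,t] = (R₀[s])[t]` (so `s = Polynomial.C Polynomial.X`, `t = Polynomial.X`),
`F = Frac(R)`, `f ∈ R` not divisible by `t` with constant coefficient `f₀ = f.coeff 0 ∈ R₀[s]`,
`S` the subring of `F` generated by `R` together with `s⁻¹, t⁻¹, f₀⁻¹, f⁻¹`,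
`g = 1 - s·f₀ ∈ R₀[s]`, and `p` a prime of `R₀` not dividing `f₀` in `R₀[s]`, the matrix
`[[1 − pg·t⁻¹, p²·t⁻¹], [−g²·t⁻¹, 1 + pg·t⁻¹]]` lies in `SL₂(F)` but not in `E₂(S)`. -/
theorem statement17 (R₀ : Type*) [CommRing R₀] [IsDomain R₀] [Algebra.FiniteType ℤ R₀]
    (f : Polynomial (Polynomial R₀)) (hf : ¬ (Polynomial.X ∣ f))
    (p : R₀) (hp : Prime p) (hpf : ¬ ((Polynomial.C p : Polynomial R₀) ∣ f.coeff 0)) :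
    let R := Polynomial (Polynomial R₀)
    let F := FractionRing R
    let ι := algebraMap R F
    let s : R := Polynomial.C Polynomial.X
    let t : R := Polynomial.X
    let f₀ : Polynomial R₀ := f.coeff 0
    let g : Polynomial R₀ := 1 - Polynomial.X * f₀
    let S : Subring F :=
      Subring.closure (Set.range ι ∪ {(ι s)⁻¹, (ι t)⁻¹, (ι (Polynomial.C f₀))⁻¹, (ι f)⁻¹})
    let M : Matrix (Fin 2) (Fin 2) F :=
      !![1 - ι (Polynomial.C (Polynomial.C p * g)) * (ι t)⁻¹,
          ι (Polynomial.C (Polynomial.C (p ^ 2))) * (ι t)⁻¹;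
        -(ι (Polynomial.C (g ^ 2)) * (ι t)⁻¹),
          1 + ι (Polynomial.C (Polynomial.C p * g)) * (ι t)⁻¹]
    ∃ hM : M.det = 1, (⟨M, hM⟩ : SL2 F) ∉ E2 S := by
  intro R F ι s t f₀ g S M
  have hιinj : Function.Injective ι := IsFractionRing.injective R F
  have hf₀ : f₀ ≠ 0 := fun h => hf (Polynomial.X_dvd_iff.2 h)
  have ht : ι t ≠ 0 := (map_ne_zero_iff _ hιinj).2 Polynomial.X_ne_zero
  have hT : ι t * (ι t)⁻¹ = 1 := mul_inv_cancel₀ ht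
  have e1 : ι (Polynomial.C (Polynomial.C p * g)) =
      ι (Polynomial.C (Polynomial.C p)) * ι (Polynomial.C g) := by
    rw [Polynomial.C_mul, map_mul]
  have e2 : ι (Polynomial.C (Polynomial.C (p ^ 2))) = ι (Polynomial.C (Polynomial.C p)) ^ 2 := by
    rw [Polynomial.C_pow, Polynomial.C_pow, map_pow]
  have e3 : ι (Polynomial.C (g ^ 2)) = ι (Polynomial.C g) ^ 2 := by
    rw [Polynomial.C_pow, map_pow]
  set P : F := ι (Polynomial.C (Polynomial.C p)) with hP
  set Q : F := ι (Polynomial.C g) with hQ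
  have hM : M.det = 1 := by
    simp only [M, Matrix.det_fin_two_of, e1, e2, e3]
    ring
  refine ⟨hM, fun hmem => ?_⟩
  obtain ⟨v, hv⟩ := exists_tAdicValuation (Polynomial R₀)
  change ∀ (r : R) (n : ℕ), v (ι r) ≤ _ ↔ _ at hv
  have hv1 : ∀ r : R, v (ι r) ≤ 1 := fun r => by
    have := (hv r 0).2 (by simp)
    simpa using this
  have hvlt : ∀ r : R, v (ι r) < 1 ↔ Polynomial.X ∣ r := fun r => by
    rw [lt_one_iff_le_exp]
    simpa using hv r 1
  have hvC : ∀ q : Polynomial R₀, v (ι (Polynomial.C q)) < 1 → q = 0 := by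
    intro q hq
    simpa [Polynomial.X_dvd_iff] using (hvlt _).1 hq
  have hvt : v (ι t) = WithZero.exp (-1 : ℤ) := by
    refine le_antisymm (by simpa using (hv t 1).2 (by simp [t])) ?_
    by_contra! h
    -- an element of value below `exp (-1)` has value at most `exp (-2)`, but `t² ∤ t`
    have h2 : v (ι t) ≤ WithZero.exp (-((2 : ℕ) : ℤ)) := by
      rw [← WithZero.lt_mul_exp_iff_le WithZero.exp_ne_zero, ← WithZero.exp_add]
      simpa using h
    rw [hv, Polynomial.X_pow_dvd_iff] at h2
    simpa [t] using h2 1 (by norm_num)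
  have hvP : v P = 1 := by
    refine le_antisymm (hv1 _) (not_lt.1 fun h => hp.ne_zero ?_)
    simpa using hvC _ h
  have htS : ι t ∈ S := Subring.subset_closure (.inl ⟨t, rfl⟩)
  have htS' : (ι t)⁻¹ ∈ S := Subring.subset_closure (.inr (by simp))
  rcases mem_or_of_mem_E2 v S ht hvt htS htS' hmem with h | ⟨γ, hγ, j, hj⟩
  · -- the entry `p² t⁻¹` has a pole at `t = 0`
    obtain ⟨-, ⟨-, hb⟩, -, -⟩ := mem_twistedSL2_one.1 h
    change v (ι (Polynomial.C (Polynomial.C (p ^ 2))) * (ι t)⁻¹) ≤ 1 at hb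
    rw [e2, v.map_mul, v.map_pow, hvP, map_inv₀, hvt, one_pow, one_mul, ← WithZero.exp_neg,
      ← WithZero.exp_zero, WithZero.exp_le_exp] at hb
    norm_num at hb
  -- `t * M` is integral, so the dominated second row of `γ * M` has no pole
  obtain ⟨ha, hb, hc, hd⟩ := mem_twistedSL2_one.1 hγ
  have hpole : ∀ i k, v (ι t * M i k) ≤ 1 := by
    intro i k
    have : ∃ r : R, ι t * M i k = ι r := by
      fin_cases i <;> fin_cases k
      · refine ⟨t - Polynomial.C (Polynomial.C p * g), ?_⟩
        change ι t * (1 - ι (Polynomial.C (Polynomial.C p * g)) * (ι t)⁻¹) = _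
        rw [map_sub]
        linear_combination -ι (Polynomial.C (Polynomial.C p * g)) * hT
      · refine ⟨Polynomial.C (Polynomial.C (p ^ 2)), ?_⟩
        change ι t * (ι (Polynomial.C (Polynomial.C (p ^ 2))) * (ι t)⁻¹) = _
        linear_combination ι (Polynomial.C (Polynomial.C (p ^ 2))) * hT
      · refine ⟨-Polynomial.C (g ^ 2), ?_⟩
        change ι t * -(ι (Polynomial.C (g ^ 2)) * (ι t)⁻¹) = _
        rw [map_neg]
        linear_combination -ι (Polynomial.C (g ^ 2)) * hT
      · refine ⟨t + Polynomial.C (Polynomial.C p * g), ?_⟩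
        change ι t * (1 + ι (Polynomial.C (Polynomial.C p * g)) * (ι t)⁻¹) = _
        rw [map_add]
        linear_combination ι (Polynomial.C (Polynomial.C p * g)) * hT
    obtain ⟨r, hr⟩ := this
    rw [hr]
    exact hv1 r
  set X : SL2 F := ⟨M, hM⟩ with hX
  have hXM : ∀ i k, X i k = M i k := fun _ _ => rfl
  have hrow0 : v (ι t * (γ * X) 0 j) ≤ 1 := by
    rw [SL2_mul_apply, hXM, hXM, mul_add, mul_left_comm, mul_left_comm (ι t)]
    refine v.map_add_le ?_ ?_ <;> rw [v.map_mul]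
    · exact mul_le_one' ha.2 (hpole _ _)
    · exact mul_le_one' hb.2 (hpole _ _)
  have hrow1 : v (ι t * (γ * X) 1 1) < 1 := by
    refine lt_of_lt_of_le ?_ hrow0
    rw [v.map_mul, v.map_mul]
    exact (mul_lt_mul_iff_right₀ ((Valuation.pos_iff v).2 ht)).2 (hj 1).2
  have hcd : v (γ 1 0 * P + γ 1 1 * Q) < 1 := by
    have e : P * (γ 1 0 * P + γ 1 1 * Q) = ι t * (γ * X) 1 1 - ι t * γ 1 1 := by
      rw [SL2_mul_apply, hXM, hXM]
      simp only [M, of_apply, cons_val', cons_val_zero, cons_val_one, cons_val_fin_one, e1, e2]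
      linear_combination -(γ 1 0 * P ^ 2 + γ 1 1 * P * Q) * hT
    have : v (P * (γ 1 0 * P + γ 1 1 * Q)) < 1 := by
      rw [e]
      refine v.map_sub_lt hrow1 ?_
      rw [v.map_mul]
      exact (mul_le_of_le_one_right' hd.2).trans_lt ((hvlt _).2 dvd_rfl)
    rwa [v.map_mul, hvP, one_mul] at this
  have hres : ∀ x ∈ integralPart v S, ∃ N : ℕ, ∀ n ≥ N, ∃ q : Polynomial R₀,
      v (x * ι (Polynomial.C (Polynomial.X * f₀ ^ 2)) ^ n - ι (Polynomial.C q)) < 1 := by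
    rintro x ⟨hxS, hx1⟩
    obtain ⟨n, r, hr⟩ := exists_denominator (Polynomial.C_ne_zero.2 Polynomial.X_ne_zero)
      Polynomial.X_ne_zero (Polynomial.C_ne_zero.2 hf₀)
      (fun h : f = 0 => hf (h ▸ dvd_zero _)) hxS
    exact exists_residue hv hx1 hr
  obtain ⟨N₁, h₁⟩ := hres _ ha
  obtain ⟨N₂, h₂⟩ := hres _ hb
  obtain ⟨N₃, h₃⟩ := hres _ hc
  obtain ⟨N₄, h₄⟩ := hres _ hd
  set n := N₁ + N₂ + N₃ + N₄
  obtain ⟨a, ha'⟩ := h₁ n (by omega)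
  obtain ⟨b, hb'⟩ := h₂ n (by omega)
  obtain ⟨c, hc'⟩ := h₃ n (by omega)
  obtain ⟨d, hd'⟩ := h₄ n (by omega)
  set u : F := ι (Polynomial.C (Polynomial.X * f₀ ^ 2)) with hu
  have hlt {x y : F} (hx : v x ≤ 1) (hy : v y < 1) : v (x * y) < 1 := by
    rw [v.map_mul]; exact (mul_le_of_le_one_left' hx).trans_lt hy
  have hun : v (u ^ n) ≤ 1 := by rw [v.map_pow]; exact pow_le_one' (hv1 _) _
  refine not_elementary_column hp hpf (a := a) (b := b) (c := c) (d := d) (k := n + n) ?_ ?_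
  · refine hvC _ ?_
    have e : ι (Polynomial.C (c * Polynomial.C p + d * (1 - Polynomial.X * f.coeff 0))) =
        u ^ n * (γ 1 0 * P + γ 1 1 * Q) - (P * (γ 1 0 * u ^ n - ι (Polynomial.C c)) +
          Q * (γ 1 1 * u ^ n - ι (Polynomial.C d))) := by
      rw [Polynomial.C_add, Polynomial.C_mul, Polynomial.C_mul, map_add, map_mul, map_mul]
      change ι (Polynomial.C c) * P + ι (Polynomial.C d) * Q = _
      ring
    rw [e]
    exact v.map_sub_lt (hlt hun hcd) (v.map_add_lt (hlt (hv1 _) hc') (hlt (hv1 _) hd'))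
  · have hdet := γ.det_coe
    rw [Matrix.det_fin_two] at hdet
    refine sub_eq_zero.1 (hvC _ ?_)
    have e : ι (Polynomial.C (a * d - b * c - (Polynomial.X * f.coeff 0 ^ 2) ^ (n + n))) =
        (γ 0 1 * u ^ n * (γ 1 0 * u ^ n - ι (Polynomial.C c)) +
          ι (Polynomial.C c) * (γ 0 1 * u ^ n - ι (Polynomial.C b))) -
        (γ 0 0 * u ^ n * (γ 1 1 * u ^ n - ι (Polynomial.C d)) +
          ι (Polynomial.C d) * (γ 0 0 * u ^ n - ι (Polynomial.C a))) := by
      rw [Polynomial.C_sub, Polynomial.C_sub, Polynomial.C_mul, Polynomial.C_mul, Polynomial.C_pow,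
        map_sub, map_sub, map_mul, map_mul, map_pow]
      change _ - u ^ (n + n) = _
      linear_combination (u ^ n * u ^ n) * hdet
    rw [e]
    have h1 : v (γ 0 1 * u ^ n) ≤ 1 := by rw [v.map_mul]; exact mul_le_one' hb.2 hun
    have h2 : v (γ 0 0 * u ^ n) ≤ 1 := by rw [v.map_mul]; exact mul_le_one' ha.2 hun
    exact v.map_sub_lt (v.map_add_lt (hlt h1 hc') (hlt (hv1 _) hb'))
      (v.map_add_lt (hlt h2 hd') (hlt (hv1 _) ha'))
end
end

section
/- Let m ≥ 2, let R = ℤ[t₁,…,t_m] be the polynomial ring in m variables over ℤ, and let F be its field of fractions. Then every group Γ with SL₂(R) ≤ Γ ≤ SL₂(F) is not finitely generated. -/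
/-!
Suppose `Γ` is generated by a finite set and let `f` be a common denominator of the entries of the
generators. Put `x = t₁`, `D = ℤ[t₂, …, t_m]`, let `g ∈ D` be the leading coefficient of `f` as a
polynomial in `x`, and `A = D[1/g]`. Expanding at `x = ∞`, with `X = 1/x`, makes `f` a unit of the
Laurent series ring `A((X))`, so `Γ` is carried into `SL₂(A((X)))` and acts on the Bruhat–Tits tree
of `SL₂(Frac(A)((X)))`. Let `o` be the base vertex. Its edges are the points of `P¹(Frac A)`, and
the stabilizer of `o` in `Γ` acts on them through `SL₂(A)`.

Write `γ ∈ Γ` as a word in the generators. The path `o, s₁ o, s₁ s₂ o, …, γ o` must cross the first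
edge of the geodesic from `o` to `γ o`, so that edge is a `Γ`-translate of an edge of one of the
finitely many geodesics from `o` to `s o`, `s` a generator or its inverse. Hence the first edges at
`o` of the geodesics to the points of `Γ o` fall into finitely many `SL₂(A)`-orbits
(`exists_equiv_directions`). The tree itself is not constructed: distances and first edges are read
off from the pole order and the leading coefficient matrix (`Level`, `Heads`), and the two facts
about geodesics needed are `level_add_of_heads` and `level_mul_inv`.

On the other hand, for `u, v ∈ D` Cohn's matrix with `a = u x`, `b = v x` lies in `SL₂(R)` and
leaves `o` in the direction `(u : v)` (`heads_cohn`). Choose an integral point `c` with `g(c) ≠ 0`.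
For the infinitely many primes `p` not dividing `g(c)` the directions `(p : t₂ - c₂)` are pairwise
inequivalent under `SL₂(A)`, because `p` and `t₂ - c₂` generate different ideals, of height two, in
the factorial ring `A` (`directions_inequiv`). This contradicts the finiteness.
-/

open Matrix Pointwise

noncomputable section

/-! ### Leading matrices over `A((X))` -/

/-- A matrix over `A((X))` has pole order at most `n`. -/
def PoleLE {A : Type*} [CommRing A] (n : ℤ) (M : Matrix (Fin 2) (Fin 2) (HahnSeries ℤ A)) : Prop :=
  ∀ i j, ∀ k < -n, (M i j).coeff k = 0

/-- The matrix of coefficients of `X ^ (-n)`. -/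
def polarCoeff {A : Type*} [CommRing A] (n : ℤ) (M : Matrix (Fin 2) (Fin 2) (HahnSeries ℤ A)) :
    Matrix (Fin 2) (Fin 2) A :=
  M.map fun a => a.coeff (-n)

/-- `M` has pole order exactly `n`, so that `polarCoeff n M` is its leading matrix. For
`A` a domain and `M ∈ SL₂(A((X)))`, the number `2 * n` is the distance by which `M` moves the base
vertex of the Bruhat–Tits tree of `SL₂(Frac(A)((X)))`. -/
def Level {A : Type*} [CommRing A] (M : Matrix (Fin 2) (Fin 2) (HahnSeries ℤ A)) (n : ℤ) : Prop :=
  PoleLE n M ∧ polarCoeff n M ≠ 0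

section Hahn

variable {A : Type*} [CommRing A]

lemma coeff_mul_lead {a b : HahnSeries ℤ A} {m n : ℤ} (ha : ∀ k < m, a.coeff k = 0)
    (hb : ∀ k < n, b.coeff k = 0) : (a * b).coeff (m + n) = a.coeff m * b.coeff n := by
  rw [HahnSeries.coeff_mul]
  rw [Finset.sum_eq_single (m, n)]
  · rintro ⟨p, q⟩ hx hne
    rw [Finset.mem_antidiagonal] at hx
    by_cases h : p < m
    · rw [ha _ h, zero_mul]
    · have : q < n := by
        by_contra! hq
        exact hne (Prod.ext (by simp at *; omega) (by simp at *; omega))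
      rw [hb _ this, mul_zero]
  · intro hx
    by_cases h1 : a.coeff m = 0
    · rw [h1, zero_mul]
    by_cases h2 : b.coeff n = 0
    · rw [h2, mul_zero]
    exact absurd (by simp [h1, h2]) hx

lemma coeff_mul_low {a b : HahnSeries ℤ A} {m n k : ℤ} (ha : ∀ k < m, a.coeff k = 0)
    (hb : ∀ k < n, b.coeff k = 0) (hk : k < m + n) : (a * b).coeff k = 0 := by
  rw [HahnSeries.coeff_mul]
  refine Finset.sum_eq_zero fun x hx => ?_
  rw [Finset.mem_antidiagonal] at hx
  by_cases h : x.1 < m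
  · rw [ha _ h, zero_mul]
  · rw [hb x.2 (by omega), mul_zero]

lemma PoleLE.mul {M N : Matrix (Fin 2) (Fin 2) (HahnSeries ℤ A)} {m n : ℤ}
    (hM : PoleLE m M) (hN : PoleLE n N) : PoleLE (m + n) (M * N) := by
  intro i j k hk
  rw [Matrix.mul_apply, Fin.sum_univ_two, HahnSeries.coeff_add,
    coeff_mul_low (hM _ _) (hN _ _) (by omega), coeff_mul_low (hM _ _) (hN _ _) (by omega),
    add_zero]

lemma polarCoeff_mul {M N : Matrix (Fin 2) (Fin 2) (HahnSeries ℤ A)} {m n : ℤ}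
    (hM : PoleLE m M) (hN : PoleLE n N) :
    polarCoeff (m + n) (M * N) = polarCoeff m M * polarCoeff n N := by
  ext i j
  simp only [polarCoeff, Matrix.map_apply, Matrix.mul_apply, Fin.sum_univ_two,
    HahnSeries.coeff_add, neg_add]
  rw [coeff_mul_lead (hM _ _) (hN _ _), coeff_mul_lead (hM _ _) (hN _ _)]

lemma Level.mul {M N : Matrix (Fin 2) (Fin 2) (HahnSeries ℤ A)} {m n : ℤ}
    (hM : Level M m) (hN : Level N n) (h : polarCoeff m M * polarCoeff n N ≠ 0) :
    Level (M * N) (m + n) :=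
  ⟨hM.1.mul hN.1, by rwa [polarCoeff_mul hM.1 hN.1]⟩

lemma PoleLE.polarCoeff_eq_zero {M : Matrix (Fin 2) (Fin 2) (HahnSeries ℤ A)} {m n : ℤ}
    (h : PoleLE m M) (hmn : m < n) : polarCoeff n M = 0 := by
  ext i j
  exact h i j _ (by omega)

lemma Level.unique {M : Matrix (Fin 2) (Fin 2) (HahnSeries ℤ A)} {m n : ℤ}
    (hm : Level M m) (hn : Level M n) : m = n := by
  rcases lt_trichotomy m n with h | h | h
  · exact absurd (hm.1.polarCoeff_eq_zero h) hn.2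
  · exact h
  · exact absurd (hn.1.polarCoeff_eq_zero h) hm.2

lemma polarCoeff_inv (γ : SL2 (HahnSeries ℤ A)) (n : ℤ) :
    polarCoeff n (↑γ⁻¹ : Matrix (Fin 2) (Fin 2) (HahnSeries ℤ A)) =
      (polarCoeff n γ.1).adjugate := by
  rw [Matrix.SpecialLinearGroup.coe_inv, Matrix.adjugate_fin_two, Matrix.adjugate_fin_two]
  ext i j
  fin_cases i <;> fin_cases j <;> simp [polarCoeff]

lemma Level.inv {γ : SL2 (HahnSeries ℤ A)} {n : ℤ} (h : Level γ.1 n) :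
    Level (γ⁻¹).1 n := by
  refine ⟨?_, fun h0 => h.2 ?_⟩
  · intro i j k hk
    have := fun i j => h.1 i j k hk
    rw [Matrix.SpecialLinearGroup.coe_inv, Matrix.adjugate_fin_two]
    fin_cases i <;> fin_cases j <;> simp [this]
  · rw [polarCoeff_inv, Matrix.adjugate_fin_two] at h0
    ext i j
    have h00 := congrFun (congrFun h0 0) 0
    have h01 := congrFun (congrFun h0 0) 1
    have h10 := congrFun (congrFun h0 1) 0
    have h11 := congrFun (congrFun h0 1) 1
    simp at h00 h01 h10 h11
    fin_cases i <;> fin_cases j <;> simp [*]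

lemma polarCoeff_zero_one : polarCoeff 0 (1 : Matrix (Fin 2) (Fin 2) (HahnSeries ℤ A)) = 1 := by
  ext i j
  fin_cases i <;> fin_cases j <;> simp [polarCoeff]

lemma Level.det_eq_one {γ : SL2 (HahnSeries ℤ A)} (h : Level γ.1 0) :
    (polarCoeff 0 γ.1).det = 1 := by
  have := polarCoeff_mul h.1 h.inv.1
  rw [← Matrix.SpecialLinearGroup.coe_mul, mul_inv_cancel, polarCoeff_inv,
    Matrix.mul_adjugate, add_zero, Matrix.SpecialLinearGroup.coe_one, polarCoeff_zero_one] at this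
  simpa using (congrFun (congrFun this 0) 0).symm

variable [IsDomain A]

lemma exists_level (γ : SL2 (HahnSeries ℤ A)) : ∃ n, Level γ.1 n := by
  -- the least order of an entry exists because the supports are bounded below
  have hb : ∃ N : ℤ, PoleLE N γ.1 := by
    refine ⟨-(min (min (γ.1 0 0).order (γ.1 0 1).order) (min (γ.1 1 0).order (γ.1 1 1).order)),
      fun i j k hk => HahnSeries.coeff_eq_zero_of_lt_order ?_⟩
    fin_cases i <;> fin_cases j <;> simp at hk ⊢ <;> omega
  obtain ⟨N, hN⟩ := hb
  have hne : ∃ i j k, (γ.1 i j).coeff k ≠ 0 := by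
    by_contra! h
    have h0 : γ.1 = 0 := by ext i j k; exact h i j k
    have := γ.2
    rw [h0] at this
    simp at this
  obtain ⟨i, j, k, hk⟩ := hne
  obtain ⟨n, hn, hmin⟩ := Int.exists_least_of_bdd (P := fun n => PoleLE n γ.1)
    ⟨-k, fun z hz => by by_contra! hlt; exact hk (hz i j k (by omega))⟩ ⟨N, hN⟩
  refine ⟨n, hn, fun h0 => ?_⟩
  have : PoleLE (n - 1) γ.1 := by
    intro i j k hk
    rcases eq_or_ne k (-n) with rfl | h
    · exact congrFun (congrFun h0 i) j
    · exact hn i j k (by omega)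
  have := hmin _ this
  omega

lemma level_one : Level (1 : SL2 (HahnSeries ℤ A)).1 0 := by
  refine ⟨fun i j k hk => ?_, ?_⟩
  · have : k ≠ 0 := by omega
    fin_cases i <;> fin_cases j <;> simp [HahnSeries.coeff_one, this]
  · rw [Matrix.SpecialLinearGroup.coe_one, polarCoeff_zero_one]
    exact one_ne_zero

lemma Level.nonneg {γ : SL2 (HahnSeries ℤ A)} {n : ℤ} (h : Level γ.1 n) : 0 ≤ n := by
  by_contra! hn
  have := h.1.mul h.inv.1
  rw [← Matrix.SpecialLinearGroup.coe_mul, mul_inv_cancel] at this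
  exact level_one.2 (this.polarCoeff_eq_zero (by omega))

/-- For `W` of rank one, `P` kills the image of `W`, and the image of `Q` lies in
`ker (adj W) = im W`. -/
lemma mul_eq_zero_of_adjugate {P W Q : Matrix (Fin 2) (Fin 2) A} (hW : W ≠ 0) (h1 : P * W = 0)
    (h2 : W.adjugate * Q = 0) : P * Q = 0 := by
  rw [Matrix.adjugate_fin_two] at h2
  have key : ∀ a b, ∀ i j, W a b * (P * Q) i j = 0 := by
    intro a b i j
    have e0 := congrFun (congrFun h1 i) 0
    have e1 := congrFun (congrFun h1 i) 1
    have f0 := congrFun (congrFun h2 0) j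
    have f1 := congrFun (congrFun h2 1) j
    simp only [Matrix.mul_apply, Fin.sum_univ_two, Matrix.zero_apply, Matrix.of_apply,
      Matrix.cons_val', Matrix.cons_val_zero, Matrix.cons_val_one, Matrix.cons_val_fin_one]
      at e0 e1 f0 f1 ⊢
    fin_cases a <;> fin_cases b <;> simp only [Fin.mk_one, Fin.zero_eta]
    · linear_combination Q 0 j * e0 + P i 1 * f1
    · linear_combination Q 0 j * e1 - P i 1 * f0
    · linear_combination Q 1 j * e0 - P i 0 * f1
    · linear_combination Q 1 j * e1 + P i 0 * f0
  by_contra hPQ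
  apply hW
  have : ∃ i j, (P * Q) i j ≠ 0 := by
    by_contra! h
    exact hPQ (by ext i j; exact h i j)
  obtain ⟨i, j, hij⟩ := this
  ext a b
  exact (mul_eq_zero.1 (key a b i j)).resolve_right hij

/-! ### Geodesics in the tree, in terms of leading matrices -/

/-- Two vertices at the same distance from the base vertex `o`, both on the geodesic
from `o` to `s o`, coincide. Here the vertices are `h₁⁻¹ o` and `h₂⁻¹ o`. -/
lemma level_mul_inv {h₁ h₂ s : SL2 (HahnSeries ℤ A)} {j l : ℤ}
    (hj₁ : Level h₁.1 j) (hj₂ : Level h₂.1 j) (hl₁ : Level (h₁ * s).1 l)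
    (hl₂ : Level (h₂ * s).1 l) (hs : Level s.1 (j + l)) : Level (h₁ * h₂⁻¹).1 0 := by
  obtain ⟨n, hn⟩ := exists_level (h₁ * h₂⁻¹)
  rcases hn.nonneg.eq_or_lt with rfl | hpos
  · exact hn
  exfalso
  have e1 : polarCoeff j (h₁⁻¹).1 * polarCoeff n (h₁ * h₂⁻¹).1 = 0 := by
    by_contra h
    have := hj₁.inv.mul hn h
    rw [← Matrix.SpecialLinearGroup.coe_mul, inv_mul_cancel_left] at this
    have := this.unique hj₂.inv
    omega
  have e2 : polarCoeff n ((h₁ * h₂⁻¹)⁻¹).1 * polarCoeff l (h₁ * s).1 = 0 := by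
    by_contra h
    have := hn.inv.mul hl₁ h
    rw [← Matrix.SpecialLinearGroup.coe_mul,
      show (h₁ * h₂⁻¹)⁻¹ * (h₁ * s) = h₂ * s by group] at this
    have := this.unique hl₂
    omega
  rw [polarCoeff_inv] at e2
  have e3 := mul_eq_zero_of_adjugate hn.2 e1 e2
  rw [← polarCoeff_mul hj₁.inv.1 hl₁.1, ← Matrix.SpecialLinearGroup.coe_mul,
    inv_mul_cancel_left] at e3
  exact hs.2 e3

/-- The columns of `M` are proportional to `(u, v)`. -/
def ColsAlong (u v : A) (M : Matrix (Fin 2) (Fin 2) A) : Prop :=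
  ∀ j, u * M 1 j = v * M 0 j

/-- The geodesic from the base vertex `o` to `γ o` is nontrivial, and its first edge points in the
direction `(u : v)`. -/
def Heads (u v : A) (γ : SL2 (HahnSeries ℤ A)) : Prop :=
  ∃ n, 0 < n ∧ Level γ.1 n ∧ ColsAlong u v (polarCoeff n γ.1)

lemma not_heads_one (u v : A) : ¬ Heads u v 1 := by
  rintro ⟨n, hn, h, -⟩
  exact hn.ne (level_one.unique h)

/-- If `h * s o` lies beyond the edge at `o` in direction `(u : v)` and `h o` does not, then `o` is
on the geodesic from `h o` to `h * s o`. -/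
lemma level_add_of_heads {u v : A} (huv : u ≠ 0) {h s : SL2 (HahnSeries ℤ A)}
    (hh : ¬ Heads u v h) {j l : ℤ} (hj : Level h.1 j) (hl : Level (h * s).1 l)
    (hc : ColsAlong u v (polarCoeff l (h * s).1)) : Level s.1 (j + l) := by
  rw [show s = h⁻¹ * (h * s) by group]
  refine hj.inv.mul hl fun h0 => hh ?_
  rw [polarCoeff_inv, Matrix.adjugate_fin_two] at h0
  set P := polarCoeff j h.1 with hP
  set Q := polarCoeff l (h * s).1 with hQ
  obtain ⟨b, hb⟩ : ∃ b, Q 0 b ≠ 0 := by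
    by_contra! hz
    apply hl.2
    ext i b
    fin_cases i
    · exact hz b
    · have := hc b
      rw [hz b, mul_zero] at this
      exact (mul_eq_zero.1 this).resolve_left huv
  have g0 := congrFun (congrFun h0 0) b
  have g1 := congrFun (congrFun h0 1) b
  have hcb := hc b
  simp [Matrix.mul_apply, Fin.sum_univ_two] at g0 g1
  have k0 : u * P 1 1 = v * P 0 1 := by
    apply mul_right_cancel₀ hb
    linear_combination u * g0 + P 0 1 * hcb
  have k1 : u * P 1 0 = v * P 0 0 := by
    apply mul_right_cancel₀ hb
    linear_combination -u * g1 + P 0 0 * hcb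
  refine ⟨j, hj.nonneg.lt_of_ne ?_, hj, fun i => by fin_cases i <;> assumption⟩
  rintro rfl
  have hdet := hj.det_eq_one
  rw [Matrix.det_fin_two] at hdet
  apply huv
  linear_combination -u * hdet + P 0 0 * k0 - P 0 1 * k1

/-- A finitely generated subgroup of `SL₂(A((X)))` leaves the base vertex in only finitely many
directions up to `SL₂(A)`: among infinitely many directions `(u i : v i)` taken by its elements,
two are related by a matrix `M` of determinant one. -/
lemma exists_equiv_directions {ι : Type*} [Infinite ι] (u v : ι → A) (hu : ∀ i, u i ≠ 0)
    (T : Set (SL2 (HahnSeries ℤ A))) (hT : T.Finite) (γ : ι → SL2 (HahnSeries ℤ A))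
    (hγ : ∀ i, γ i ∈ Subgroup.closure T) (hd : ∀ i, Heads (u i) (v i) (γ i)) :
    ∃ i j, i ≠ j ∧ ∃ M : Matrix (Fin 2) (Fin 2) A, M.det = 1 ∧
      v i * (M 0 0 * u j + M 0 1 * v j) = u i * (M 1 0 * u j + M 1 1 * v j) := by
  -- the path of prefixes of a word for `γ i` crosses the edge `(u i : v i)`
  have step : ∀ i, ∃ h s, s ∈ T ∪ T⁻¹ ∧ ¬ Heads (u i) (v i) h ∧ Heads (u i) (v i) (h * s) := by
    intro i
    by_contra! hcon
    refine absurd (hd i) ?_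
    refine Subgroup.closure_induction_right (p := fun x _ => ¬ Heads (u i) (v i) x)
      (not_heads_one _ _) ?_ ?_ (hγ i)
    · intro x _ y hy hx
      exact hcon x y (Or.inl hy) hx
    · intro x _ y hy hx
      exact hcon x y⁻¹ (Or.inr (by simpa using hy)) hx
  choose h s hs hh hhs using step
  choose l hl hll hc using hhs
  choose j hj using fun i => exists_level (h i)
  choose N hN using exists_level (A := A)
  have hsum : ∀ i, j i + l i = N (s i) := fun i =>
    (level_add_of_heads (hu i) (hh i) (hj i) (hll i) (hc i)).unique (hN _)
  have : Finite ↥(T ∪ T⁻¹) := (hT.union hT.inv).to_subtype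
  -- the edge is determined up to the group by the generator `s i` and its position `j i` on the
  -- geodesic from `o` to `s i o`
  let U := Σ t : ↥(T ∪ T⁻¹), ↥(Set.Icc 0 (N t.1))
  let f : ι → U := fun i => ⟨⟨s i, hs i⟩, ⟨j i, (hj i).nonneg, by
    have := hsum i; have := hl i; dsimp; omega⟩⟩
  obtain ⟨a, b, hab, hf⟩ := Finite.exists_ne_map_eq_of_infinite f
  have hsab : s a = s b := congrArg (fun t : U => t.1.1) hf
  have hjab : j a = j b := congrArg (fun t : U => (t.2 : ℤ)) hf
  have hlab : l a = l b := by
    have := hsum a; have := hsum b; rw [hsab] at *; omega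
  have lev := level_add_of_heads (hu a) (hh a) (hj a) (hll a) (hc a)
  have ha := hj a
  have hla := hll a
  have hca := hc a
  rw [hsab, hlab] at hla hca
  rw [hsab, hlab, hjab] at lev
  rw [hjab] at ha
  have hw := level_mul_inv ha (hj b) hla (hll b) lev
  refine ⟨a, b, hab, polarCoeff 0 (h a * (h b)⁻¹).1, hw.det_eq_one, ?_⟩
  have hmul := polarCoeff_mul hw.1 (hll b).1
  rw [← Matrix.SpecialLinearGroup.coe_mul,
    show h a * (h b)⁻¹ * (h b * s b) = h a * s b by group, zero_add] at hmul
  rw [hmul] at hca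
  have hcb := hc b
  set M := polarCoeff 0 (h a * (h b)⁻¹).1
  have hQ := (hll b).2
  set Q := polarCoeff (l b) (h b * s b).1
  obtain ⟨k, hk⟩ : ∃ k, Q 0 k ≠ 0 := by
    by_contra! hz
    apply hQ
    ext i k
    fin_cases i
    · exact hz k
    · have := hcb k
      rw [hz k, mul_zero] at this
      exact (mul_eq_zero.1 this).resolve_left (hu b)
  have e1 := hca k
  have e2 := hcb k
  simp only [Matrix.mul_apply, Fin.sum_univ_two] at e1
  apply mul_right_cancel₀ hk
  linear_combination -u b * e1 + (u a * M 1 1 - v a * M 0 1) * e2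

end Hahn

/-! ### Inequivalent directions over `ℤ[t][1/g]` -/

section Arithmetic

open MvPolynomial

/-- For distinct primes `p`, `q` with `p` not dividing `g(c)`, the points `(p : tᵢ - cᵢ)` and
`(q : tᵢ - cᵢ)` are not in the same orbit of `SL₂(ℤ[t][1/g])`: an equivalence would put `q` into
the ideal `(p, tᵢ - cᵢ)`. -/
lemma directions_inequiv {n : ℕ} (i : Fin n) (c : Fin n → ℤ) (g : MvPolynomial (Fin n) ℤ)
    {p q : ℕ} (hp : p.Prime) (hq : q.Prime) (hpq : p ≠ q) (hpg : ¬ (p : ℤ) ∣ eval c g)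
    {A : Type*} [CommRing A] [Algebra (MvPolynomial (Fin n) ℤ) A] [IsLocalization.Away g A]
    (hinj : Function.Injective (algebraMap (MvPolynomial (Fin n) ℤ) A))
    (M : Matrix (Fin 2) (Fin 2) A) (hM : M.det = 1)
    (z : MvPolynomial (Fin n) ℤ) (hz : z = X i - C (c i))
    (h : algebraMap _ A z *
        (M 0 0 * algebraMap (MvPolynomial (Fin n) ℤ) A (C (q : ℤ)) + M 0 1 * algebraMap _ A z) =
      algebraMap (MvPolynomial (Fin n) ℤ) A (C (p : ℤ)) *
        (M 1 0 * algebraMap (MvPolynomial (Fin n) ℤ) A (C (q : ℤ)) + M 1 1 * algebraMap _ A z)) :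
    False := by
  obtain ⟨⟨_, k, rfl⟩, hb⟩ := IsLocalization.exist_integer_multiples_of_finite
    (Submonoid.powers g) (fun x : Fin 2 × Fin 2 => M x.1 x.2)
  choose N hN using hb
  simp only [Algebra.smul_def] at hN
  have h00 := hN (0, 0)
  have h01 := hN (0, 1)
  have h10 := hN (1, 0)
  have h11 := hN (1, 1)
  dsimp only at h00 h01 h10 h11
  rw [Matrix.det_fin_two] at hM
  -- the same identities with denominators cleared
  have e1 : z * (N (0, 0) * C (q : ℤ) + N (0, 1) * z) =
      C (p : ℤ) * (N (1, 0) * C (q : ℤ) + N (1, 1) * z) := by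
    apply hinj
    simp only [map_mul, map_add, h00, h01, h10, h11] at h ⊢
    linear_combination algebraMap (MvPolynomial (Fin n) ℤ) A (g ^ k) * h
  have e2 : N (0, 0) * N (1, 1) - N (0, 1) * N (1, 0) = g ^ k * g ^ k := by
    apply hinj
    simp only [map_mul, map_sub, h00, h01, h10, h11]
    linear_combination algebraMap (MvPolynomial (Fin n) ℤ) A (g ^ k) * algebraMap (MvPolynomial (Fin n) ℤ) A (g ^ k) * hM
  have hpp : Prime (C (p : ℤ) : MvPolynomial (Fin n) ℤ) :=
    prime_C_iff _ |>.2 (Nat.prime_iff_prime_int.1 hp)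
  have hpz : ¬ (C (p : ℤ) : MvPolynomial (Fin n) ℤ) ∣ z := by
    intro hd
    have := map_dvd (eval (fun j => c j + 1)) hd
    simp [hz] at this
    exact hp.one_lt.ne' (by simpa using Int.isUnit_iff_natAbs_eq.1 (isUnit_of_dvd_one this))
  -- `μ` is the factor of proportionality between the two vectors
  obtain ⟨μ, hμ⟩ := (hpp.dvd_or_dvd (Dvd.intro _ e1.symm)).resolve_left hpz
  have e3 : N (1, 0) * C (q : ℤ) + N (1, 1) * z = μ * z := by
    apply mul_left_cancel₀ hpp.ne_zero
    linear_combination -e1 + z * hμ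
  -- the adjugate matrix turns the relation around; modulo `p`, at `c`, its left side vanishes
  have e4 : μ * (N (1, 1) * C (p : ℤ) - N (0, 1) * z) = g ^ k * g ^ k * C (q : ℤ) := by
    linear_combination -N (1, 1) * hμ + N (0, 1) * e3 + C (q : ℤ) * e2
  have e5 := congrArg (eval c) e4
  simp [hz] at e5
  have hpi := Nat.prime_iff_prime_int.1 hp
  have hd : (p : ℤ) ∣ eval c g ^ k * eval c g ^ k * q := by
    rw [← e5]
    exact Dvd.intro_left (eval c μ * eval c (N (1, 1))) (by ring)
  rcases hpi.dvd_or_dvd hd with hd | hd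
  · rcases hpi.dvd_or_dvd hd with hd | hd <;> exact hpg (hpi.dvd_of_dvd_pow hd)
  · exact hpq ((Nat.prime_dvd_prime_iff_eq hp hq).1 (by exact_mod_cast hd))

end Arithmetic

/-! ### Expansion at infinity -/

section Expansion

variable {D A : Type*} [CommRing D] [CommRing A]

/-- Expansion of polynomials at infinity: the ring map `D[x] → A((X))` sending `x` to `X⁻¹`. -/
def expand (φ : D →+* A) : Polynomial D →+* HahnSeries ℤ A :=
  Polynomial.eval₂RingHom (HahnSeries.C.comp φ) (HahnSeries.single (-1) 1)

lemma single_neg_one_pow (n : ℕ) :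
    (HahnSeries.single (-1 : ℤ) (1 : A)) ^ n = HahnSeries.single (-(n : ℤ)) 1 := by
  rw [HahnSeries.single_pow]
  simp

lemma expand_coeff (φ : D →+* A) (P : Polynomial D) (k : ℤ) :
    (expand φ P).coeff k = if k ≤ 0 then φ (P.coeff k.natAbs) else 0 := by
  induction P using Polynomial.induction_on' with
  | add P Q hP hQ =>
    rw [map_add, HahnSeries.coeff_add, hP, hQ]
    split_ifs <;> simp
  | monomial n a =>
    simp only [expand, Polynomial.coe_eval₂RingHom, Polynomial.eval₂_monomial,
      single_neg_one_pow, RingHom.comp_apply, HahnSeries.C_apply, HahnSeries.single_mul_single,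
      HahnSeries.coeff_single, Polynomial.coeff_monomial]
    split_ifs <;> first | omega | simp

lemma isUnit_expand [IsDomain A] (φ : D →+* A) (P : Polynomial D)
    (h : IsUnit (φ P.leadingCoeff)) : IsUnit (expand φ P) := by
  have hc : (expand φ P).coeff (-(P.natDegree : ℤ)) = φ P.leadingCoeff := by
    rw [expand_coeff]
    simp
  have h0 : expand φ P ≠ 0 := by
    intro h0
    rw [h0] at hc
    exact h.ne_zero hc.symm
  have hord : (expand φ P).order = -(P.natDegree : ℤ) := by
    apply le_antisymm (HahnSeries.order_le_of_coeff_ne_zero (by rw [hc]; exact h.ne_zero))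
    by_contra! hlt
    have := HahnSeries.coeff_order_eq_zero.not.2 h0
    rw [expand_coeff, if_pos (by omega),
      Polynomial.coeff_eq_zero_of_natDegree_lt (by omega), map_zero] at this
    exact this rfl
  rw [HahnSeries.isUnit_iff, HahnSeries.leadingCoeff_eq, hord, hc]
  exact h

end Expansion

/-! ### Cohn's matrices -/

/-- Cohn's matrix `[[1 - a b, a²], [-b², 1 + a b]]`. -/
def cohn {A : Type*} [CommRing A] (a b : A) : SL2 A :=
  ⟨!![1 - a * b, a ^ 2; -b ^ 2, 1 + a * b], by rw [Matrix.det_fin_two_of]; ring⟩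

lemma map_cohn {A B : Type*} [CommRing A] [CommRing B] (φ : A →+* B) (a b : A) :
    Matrix.SpecialLinearGroup.map φ (cohn a b) = cohn (φ a) (φ b) := by
  ext i j
  change φ ((cohn a b).1 i j) = _
  fin_cases i <;> fin_cases j <;> simp [cohn]

/-- Cohn's matrix for `a = u X⁻¹`, `b = v X⁻¹` points in the direction `(u : v)`. -/
lemma heads_cohn {A : Type*} [CommRing A] [IsDomain A] (u v : A) (hu : u ≠ 0) :
    Heads u v (cohn (HahnSeries.single (-1 : ℤ) u) (HahnSeries.single (-1 : ℤ) v)) := by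
  refine ⟨2, two_pos, ⟨?_, ?_⟩, ?_⟩
  · intro i j k hk
    have h1 : k ≠ 0 := by omega
    have h2 : k ≠ -2 := by omega
    fin_cases i <;> fin_cases j <;>
      simp [cohn, pow_two, HahnSeries.coeff_one, h1, h2]
  · intro h0
    have := congrFun (congrFun h0 0) 1
    simp [polarCoeff, cohn, pow_two, hu] at this
  · intro j
    fin_cases j <;>
      simp [polarCoeff, cohn, pow_two, HahnSeries.coeff_one] <;> ring

/-! ### Clearing denominators of a finitely generated group -/

lemma exists_common_denominator {R : Type*} [CommRing R] [IsDomain R]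
    (T : Finset (SL2 (FractionRing R))) :
    ∃ f : R, f ≠ 0 ∧ ∀ γ ∈ T, ∀ i j, ∃ r : R,
      algebraMap R (FractionRing R) f * γ.1 i j = algebraMap R (FractionRing R) r := by
  obtain ⟨b, hb⟩ := IsLocalization.exist_integer_multiples_of_finite (nonZeroDivisors R)
    (fun x : T × Fin 2 × Fin 2 => x.1.1.1 x.2.1 x.2.2)
  refine ⟨b, nonZeroDivisors.ne_zero b.2, fun γ hγ i j => ?_⟩
  obtain ⟨r, hr⟩ := hb (⟨γ, hγ⟩, i, j)
  refine ⟨r, ?_⟩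
  rw [hr]
  exact (Algebra.smul_def _ _).symm

/-- If `SL₂(R)` is contained in a finitely generated subgroup of `SL₂(Frac R)`, then for some
`f ≠ 0` its image under every ring map inverting `f` is contained in a finitely generated
group: the larger group lies in `SL₂(R[1/f])` and can be mapped along. -/
lemma exists_finite_closure {R : Type*} [CommRing R] [IsDomain R]
    (Γ : Subgroup (SL2 (FractionRing R))) (hfg : Γ.FG)
    (hΓ : (Matrix.SpecialLinearGroup.map (algebraMap R (FractionRing R))).range ≤ Γ) :
    ∃ f : R, f ≠ 0 ∧ ∀ {B : Type _} [CommRing B] (φ : R →+* B), IsUnit (φ f) →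
      ∃ T : Set (SL2 B), T.Finite ∧
        ∀ γ : SL2 R, Matrix.SpecialLinearGroup.map φ γ ∈ Subgroup.closure T := by
  obtain ⟨T, rfl⟩ := hfg
  obtain ⟨f, hf, hT⟩ := exists_common_denominator T
  refine ⟨f, hf, fun {B} _ φ hu => ?_⟩
  have hF : IsUnit (algebraMap R (FractionRing R) f) :=
    IsUnit.mk0 _ (by simpa using hf)
  let L := Localization.Away f
  let ι : L →+* FractionRing R := IsLocalization.Away.lift f hF
  let ψ : L →+* B := IsLocalization.Away.lift f hu
  have hιR : ∀ r, ι (algebraMap R L r) = algebraMap R _ r := fun r =>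
    IsLocalization.Away.lift_eq f hF r
  have hψR : ∀ r, ψ (algebraMap R L r) = φ r := fun r =>
    IsLocalization.Away.lift_eq f hu r
  have hι : Function.Injective ι := by
    refine (IsLocalization.lift_injective_iff _).2 fun x y => ?_
    rw [(IsLocalization.injective L (powers_le_nonZeroDivisors_of_noZeroDivisors hf)).eq_iff,
      (IsFractionRing.injective R (FractionRing R)).eq_iff]
  have hιS : Function.Injective (Matrix.SpecialLinearGroup.map (n := Fin 2) ι) := by
    intro x y hxy
    ext i j
    apply hι
    exact congrArg (fun γ : SL2 (FractionRing R) => γ.1 i j) hxy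
  -- each generator lifts to `SL₂(R[1/f])`
  have hlift : ∀ γ ∈ T, ∃ δ : SL2 L, Matrix.SpecialLinearGroup.map ι δ = γ := by
    intro γ hγ
    have : ∀ i j, ∃ l : L, ι l = γ.1 i j := by
      intro i j
      obtain ⟨r, hr⟩ := hT γ hγ i j
      refine ⟨IsLocalization.mk' L r ⟨f, Submonoid.mem_powers f⟩, ?_⟩
      apply hF.mul_left_cancel
      rw [hr, ← hιR, ← hιR, ← map_mul, IsLocalization.mk'_spec'_mk]
    choose m hm using this
    refine ⟨⟨Matrix.of m, hι ?_⟩, ?_⟩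
    · rw [RingHom.map_det, map_one, ← γ.2]
      congr 1
      ext i j
      exact hm i j
    · ext i j
      exact hm i j
  choose! δ hδ using hlift
  let TL : Set (SL2 L) := Set.image δ T
  have hTL : Set.image (Matrix.SpecialLinearGroup.map (n := Fin 2) ι) TL = T := by
    rw [Set.image_image]
    ext x
    constructor
    · rintro ⟨y, hy, rfl⟩
      simpa [hδ y hy] using hy
    · intro hx
      exact ⟨x, hx, hδ x hx⟩
  refine ⟨Set.image (Matrix.SpecialLinearGroup.map ψ) TL, (T.finite_toSet.image _).image _, fun γ => ?_⟩
  rw [← MonoidHom.map_closure]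
  have hmem : Matrix.SpecialLinearGroup.map (algebraMap R L) γ ∈ Subgroup.closure TL := by
    have h1 := hΓ ⟨γ, rfl⟩
    rw [← hTL, ← MonoidHom.map_closure] at h1
    obtain ⟨x, hx, hxe⟩ := h1
    have hγx : Matrix.SpecialLinearGroup.map (algebraMap R L) γ = x := by
      apply hιS
      rw [hxe]
      ext i j
      exact hιR _
    rw [hγx]
    exact hx
  refine ⟨_, hmem, ?_⟩
  ext i j
  exact hψR _

/-- For `m ≥ 2`, `R = ℤ[t₁,…,t_m]` with fraction field `F`, every group `Γ`
with `SL₂(R) ≤ Γ ≤ SL₂(F)` is not finitely generated. -/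
theorem statement18 (m : ℕ) (hm : 2 ≤ m)
    (Γ : Subgroup (SL2 (FractionRing (MvPolynomial (Fin m) ℤ))))
    (hΓ : (Matrix.SpecialLinearGroup.map
        (algebraMap (MvPolynomial (Fin m) ℤ)
          (FractionRing (MvPolynomial (Fin m) ℤ)))).range ≤ Γ) :
    ¬ Γ.FG := by
  intro hfg
  obtain ⟨n, rfl⟩ : ∃ n, m = n + 2 := ⟨m - 2, by omega⟩
  obtain ⟨f, hf, hT⟩ := exists_finite_closure Γ hfg hΓ
  let e := MvPolynomial.finSuccEquiv ℤ (n + 1)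
  let g : MvPolynomial (Fin (n + 1)) ℤ := (e f).leadingCoeff
  have hg : g ≠ 0 := by
    simpa [g] using hf
  obtain ⟨c, hc⟩ : ∃ c, MvPolynomial.eval c g ≠ 0 := by
    by_contra! h
    exact hg (MvPolynomial.funext fun c => by simpa using h c)
  let A := Localization.Away g
  have hpow := powers_le_nonZeroDivisors_of_noZeroDivisors hg
  have : IsDomain A := IsLocalization.isDomain_localization hpow
  let α := algebraMap (MvPolynomial (Fin (n + 1)) ℤ) A
  have hα : Function.Injective α := IsLocalization.injective A hpow
  let φ : MvPolynomial (Fin (n + 2)) ℤ →+* HahnSeries ℤ A := (expand α).comp e.toRingHom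
  obtain ⟨T, hTfin, hmem⟩ := hT φ
    (isUnit_expand α (e f) (IsLocalization.Away.algebraMap_isUnit g))
  let I := {q : ℕ | q.Prime} \ Set.Iic (MvPolynomial.eval c g).natAbs
  have : Infinite I := (Nat.infinite_setOfPred_prime.sdiff (Set.finite_Iic _)).to_subtype
  have hI : ∀ q : I, ¬ (q : ℤ) ∣ MvPolynomial.eval c g := fun q hd =>
    q.2.2 (Nat.le_of_dvd (Int.natAbs_pos.2 hc) (Int.natCast_dvd.1 hd))
  let z : MvPolynomial (Fin (n + 1)) ℤ := MvPolynomial.X 0 - MvPolynomial.C (c 0)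
  let u : I → A := fun q => α (MvPolynomial.C (q : ℤ))
  have hu : ∀ q, u q ≠ 0 := by
    intro q h
    have := (map_eq_zero_iff α hα).1 h
    rw [MvPolynomial.C_eq_zero] at this
    exact q.2.1.ne_zero (by exact_mod_cast this)
  -- elements of `ℤ[t₁, …, t_m]` whose expansion is the single term `α(d) X⁻¹`
  have hφ : ∀ d, φ (e.symm (Polynomial.C d * Polynomial.X)) = HahnSeries.single (-1 : ℤ) (α d) := by
    intro d
    have : φ (e.symm (Polynomial.C d * Polynomial.X)) =
        expand α (Polynomial.C d * Polynomial.X) :=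
      congrArg (expand α) (e.apply_symm_apply _)
    rw [this]
    simp [expand]
  obtain ⟨p, q, hpq, M, hM, hrel⟩ := exists_equiv_directions u (fun _ => α z) hu T hTfin
    (fun q => cohn (HahnSeries.single (-1 : ℤ) (u q)) (HahnSeries.single (-1 : ℤ) (α z)))
    (fun q => by
      have := hmem (cohn (e.symm (Polynomial.C (MvPolynomial.C (q : ℤ)) * Polynomial.X))
        (e.symm (Polynomial.C z * Polynomial.X)))
      rwa [map_cohn, hφ, hφ] at this)
    (fun q => heads_cohn _ _ (hu q))
  exact directions_inequiv 0 c g p.2.1 q.2.1 (fun h => hpq (Subtype.ext h)) (hI p) hα M hM z rfl hrel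
end
end
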